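/- arXiv:1607.07397 — 14 statements merged into one kernel-verified Lean document; each statement's English description precedes it below -/
import Mathlib

section
/- Let η ∈ ℤ≥0, let r : ℂ → ℂ be analytic at 0, and let f be a function meromorphic at 0 that satisfies the Riccati equation f'(t) + f(t)² + f(t)(−η/t + r(t)) = 0 for all t in some punctured neighbourhood of 0. Then exactly one of the following holds: (i) f is analytic at 0, and there exists a function h analytic at 0 such that f(t) = t^η · h(t) for all t in a neighbourhood of 0 and h satisfies the regularised Riccati equation h'(t) + t^η h(t)² + h(t) r(t) = 0 on a neighbourhood of 0; or (ii) f has a simple pole at 0 with residue η + 1, i.e. there exists a function k analytic at 0 such that f(t) = (η+1)/t + k(t) for all t in a punctured neighbourhood of 0. -/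
open Filter Topology

lemma aux_zero {F : ℂ → ℂ} (hF : ContinuousAt F 0) (h : ∀ᶠ t in 𝓝[≠] (0 : ℂ), F t = 0) :
    F 0 = 0 := by
  have h1 : Tendsto F (𝓝[≠] (0 : ℂ)) (𝓝 (F 0)) := hF.tendsto.mono_left nhdsWithin_le_nhds
  have h2 : Tendsto F (𝓝[≠] (0 : ℂ)) (𝓝 0) :=
    tendsto_const_nhds.congr' (h.mono fun t ht => ht.symm)
  exact tendsto_nhds_unique h1 h2

lemma aux_ev {F : ℂ → ℂ} (hF : ContinuousAt F 0) (h : ∀ᶠ t in 𝓝[≠] (0 : ℂ), F t = 0) :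
    ∀ᶠ t in 𝓝 (0 : ℂ), F t = 0 := by
  have h0 := aux_zero hF h
  rw [eventually_nhdsWithin_iff] at h
  filter_upwards [h] with t ht
  by_cases h1 : t = 0
  · rw [h1, h0]
  · exact ht h1

/-- dichotomy for meromorphic solutions of the Riccati equation
`f' + f² + f·(−η/t + r) = 0` at the origin. -/
theorem stmt_0 (η : ℕ) (r f : ℂ → ℂ)
    (hr : AnalyticAt ℂ r 0) (hf : MeromorphicAt f 0)
    (hRic : ∀ᶠ t in 𝓝[≠] (0 : ℂ),
      deriv f t + f t ^ 2 + f t * (-(η : ℂ) / t + r t) = 0) :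
    Xor'
      -- (i) `f` is analytic at 0, of the form `t^η · h(t)` with `h` solving the
      -- regularised Riccati equation
      ((∃ g : ℂ → ℂ, AnalyticAt ℂ g 0 ∧ ∀ᶠ t in 𝓝[≠] (0 : ℂ), f t = g t) ∧
        ∃ h : ℂ → ℂ, AnalyticAt ℂ h 0 ∧
          (∀ᶠ t in 𝓝[≠] (0 : ℂ), f t = t ^ η * h t) ∧
          (∀ᶠ t in 𝓝 (0 : ℂ), deriv h t + t ^ η * h t ^ 2 + h t * r t = 0))
      -- (ii) `f` has a simple pole at 0 with residue `η + 1`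
      (∃ k : ℂ → ℂ, AnalyticAt ℂ k 0 ∧
        ∀ᶠ t in 𝓝[≠] (0 : ℂ), f t = ((η : ℂ) + 1) / t + k t) := by
  have hne : ∀ᶠ t in 𝓝[≠] (0 : ℂ), t ≠ 0 := eventually_mem_nhdsWithin
  have hη : (η : ℂ) + 1 ≠ 0 := by exact_mod_cast Nat.succ_ne_zero η
  refine (xor_iff_or_and_not_and _ _).mpr ?_
  refine ⟨?_, ?_⟩
  swap
  · rintro ⟨⟨⟨g, hg, hfg⟩, -⟩, k, hk, hfk⟩
    have := hg.continuousAt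
    have := hk.continuousAt
    have h0 := aux_zero (F := fun t => t * g t - t * k t - ((η : ℂ) + 1)) (by fun_prop) (by
      filter_upwards [hfg, hfk, hne] with t h1 h2 h3
      rw [← h1, h2]
      field_simp
      ring)
    simp only [zero_mul, sub_zero, zero_sub, neg_eq_zero] at h0
    exact hη h0
  by_cases htop : meromorphicOrderAt f 0 = ⊤
  · rw [meromorphicOrderAt_eq_top_iff] at htop
    left
    exact ⟨⟨fun _ => 0, analyticAt_const, htop⟩, fun _ => 0, analyticAt_const,
      by simpa using htop, by simp⟩
  obtain ⟨n, hn⟩ := WithTop.ne_top_iff_exists.mp htop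
  obtain ⟨g, hg, hg0, hfg⟩ := (meromorphicOrderAt_eq_int_iff hf).mp hn.symm
  simp only [sub_zero, smul_eq_mul] at hfg
  have hgan : ∀ᶠ t in 𝓝[≠] (0 : ℂ), AnalyticAt ℂ g t :=
    hg.eventually_analyticAt.filter_mono nhdsWithin_le_nhds
  have hfg2 : ∀ᶠ t in 𝓝[≠] (0 : ℂ), f =ᶠ[𝓝 t] fun z => z ^ n * g z := by
    have := eventually_eventually_nhdsWithin.mpr hfg
    filter_upwards [this, hne] with t ht h0
    rwa [isOpen_compl_singleton.nhdsWithin_eq h0] at ht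
  -- the equation for `g`
  have key : ∀ᶠ t in 𝓝[≠] (0 : ℂ),
      (n - η : ℂ) * g t + t * deriv g t + t * (t ^ n * g t ^ 2) + t * r t * g t = 0 := by
    filter_upwards [hRic, hfg2, hgan, hne] with t h1 h2 h3 h0
    have hd : deriv f t = (n * t ^ (n - 1)) * g t + t ^ n * deriv g t := by
      rw [h2.deriv_eq]
      exact ((hasDerivAt_zpow n t (Or.inl h0)).mul h3.differentiableAt.hasDerivAt).deriv
    rw [hd, h2.eq_of_nhds, zpow_sub_one₀ h0] at h1
    have hz : t ^ n ≠ 0 := zpow_ne_zero n h0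
    have e : t ^ n * ((n - η : ℂ) * g t + t * deriv g t + t * (t ^ n * g t ^ 2) + t * r t * g t)
        = t * (n * (t ^ n * t⁻¹) * g t + t ^ n * deriv g t + (t ^ n * g t) ^ 2
          + t ^ n * g t * (-(η : ℂ) / t + r t)) := by
      field_simp
      ring
    rw [h1, mul_zero] at e
    exact (mul_eq_zero.mp e).resolve_left hz
  have c1 := hg.continuousAt
  have c2 := hg.deriv.continuousAt
  have c3 := hr.continuousAt
  rcases lt_trichotomy n (-1) with hlt | heq | hgt
  · -- impossible
    exfalso
    obtain ⟨m, hm⟩ : ∃ m : ℕ, n = -((m : ℤ) + 2) := ⟨(-n - 2).toNat, by omega⟩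
    have h0 := aux_zero (F := fun t => t ^ (m + 1) * ((n - η : ℂ) * g t + t * deriv g t
        + t * r t * g t) + g t ^ 2) (by fun_prop) (by
      filter_upwards [key, hne] with t h1 h0
      have hz : t ^ (m + 1) * (t * t ^ n) = 1 := by
        have : t ^ n = (t ^ (m + 2))⁻¹ := by
          rw [hm, zpow_neg]
          norm_cast
        rw [this]
        field_simp
        ring
      linear_combination t ^ (m + 1) * h1 - g t ^ 2 * hz)
    simp [hg0] at h0
  · right
    subst heq
    have h0 := aux_zero (F := fun t => (-1 - η : ℂ) * g t + t * deriv g t + g t ^ 2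
        + t * r t * g t) (by fun_prop) (by
      filter_upwards [key, hne] with t h1 h0
      have hz : t * t ^ (-1 : ℤ) = 1 := by
        rw [zpow_neg_one]
        exact mul_inv_cancel₀ h0
      push_cast at h1
      linear_combination h1 - g t ^ 2 * hz)
    have hg1 : g 0 = η + 1 := by
      apply mul_left_cancel₀ hg0
      simp only [zero_mul, add_zero] at h0
      linear_combination h0
    obtain ⟨p, hp⟩ := hg
    refine ⟨dslope g 0, ⟨_, hp.has_fpower_series_dslope_fslope⟩, ?_⟩
    filter_upwards [hfg, hne] with t h1 h0
    rw [h1, dslope_of_ne _ h0, slope_def_field, hg1, zpow_neg_one]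
    field_simp
    ring
  · left
    obtain ⟨m, rfl⟩ : ∃ m : ℕ, n = m := ⟨n.toNat, by omega⟩
    simp only [zpow_natCast, Int.cast_natCast] at key hfg
    have h0 := aux_zero (by fun_prop) key
    have hm : m = η := by
      simp only [zero_mul, add_zero, mul_eq_zero, hg0, or_false] at h0
      exact_mod_cast sub_eq_zero.mp h0
    subst hm
    refine ⟨⟨fun t => t ^ m * g t, by fun_prop, hfg⟩, g, hg, hfg, ?_⟩
    apply aux_ev (by fun_prop)
    filter_upwards [key, hne] with t h1 h0
    apply mul_left_cancel₀ h0
    linear_combination h1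
end

section
/- Let η ∈ ℤ≥0 and let r : ℂ → ℂ be analytic at 0. There is at most one singular solution of the Riccati equation at 0: if f₁ and f₂ are both meromorphic at 0, both have a pole at 0, and both satisfy f'(t) + f(t)² + f(t)(−η/t + r(t)) = 0 on a punctured neighbourhood of 0, then f₁(t) = f₂(t) for all t in some punctured neighbourhood of 0. -/
open Filter Topology

/-- uniqueness of the singular (pole at 0) solution of the Riccati
equation `f' + f² + f·(−η/t + r) = 0` at the origin. -/
theorem stmt_1 (η : ℕ) (r f₁ f₂ : ℂ → ℂ)
    (hr : AnalyticAt ℂ r 0)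
    (hf₁ : MeromorphicAt f₁ 0) (hf₂ : MeromorphicAt f₂ 0)
    (hpole₁ : Tendsto (fun t => ‖f₁ t‖) (𝓝[≠] (0 : ℂ)) atTop)
    (hpole₂ : Tendsto (fun t => ‖f₂ t‖) (𝓝[≠] (0 : ℂ)) atTop)
    (hRic₁ : ∀ᶠ t in 𝓝[≠] (0 : ℂ),
      deriv f₁ t + f₁ t ^ 2 + f₁ t * (-(η : ℂ) / t + r t) = 0)
    (hRic₂ : ∀ᶠ t in 𝓝[≠] (0 : ℂ),
      deriv f₂ t + f₂ t ^ 2 + f₂ t * (-(η : ℂ) / t + r t) = 0) :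
    ∀ᶠ t in 𝓝[≠] (0 : ℂ), f₁ t = f₂ t := by
  set w : ℂ → ℂ := f₁⁻¹ - f₂⁻¹ with hw
  have hwm : MeromorphicAt w 0 := hf₁.inv.sub hf₂.inv
  have h0 : Tendsto w (𝓝[≠] (0 : ℂ)) (𝓝 0) := by
    have a1 : Tendsto (fun t => (f₁ t)⁻¹) (𝓝[≠] (0 : ℂ)) (𝓝 0) :=
      tendsto_inv₀_cobounded.comp (tendsto_norm_atTop_iff_cobounded.mp hpole₁)
    have a2 : Tendsto (fun t => (f₂ t)⁻¹) (𝓝[≠] (0 : ℂ)) (𝓝 0) :=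
      tendsto_inv₀_cobounded.comp (tendsto_norm_atTop_iff_cobounded.mp hpole₂)
    simpa [hw, Pi.sub_def] using a1.sub a2
  by_cases htop : meromorphicOrderAt w 0 = ⊤
  · rw [meromorphicOrderAt_eq_top_iff] at htop
    filter_upwards [htop] with t ht
    simpa [hw, sub_eq_zero] using ht
  exfalso
  have hpos := (tendsto_zero_iff_meromorphicOrderAt_pos hwm).mp h0
  obtain ⟨n, hn⟩ := WithTop.ne_top_iff_exists.mp htop
  rw [← hn] at hpos
  have hnpos : 0 < n := by exact_mod_cast hpos
  obtain ⟨g, hg, hg0, hwg⟩ := (meromorphicOrderAt_eq_int_iff hwm).mp hn.symm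
  have hne : ∀ᶠ t in 𝓝[≠] (0 : ℂ), t ≠ 0 := eventually_mem_nhdsWithin
  have key : ∀ᶠ t in 𝓝[≠] (0 : ℂ),
      (n : ℂ) * g t + t * deriv g t - g t * (t * r t - η) = 0 := by
    filter_upwards [hRic₁, hRic₂, hne, hf₁.eventually_analyticAt, hf₂.eventually_analyticAt,
      hg.eventually_analyticAt.filter_mono nhdsWithin_le_nhds,
      hpole₁.eventually_gt_atTop 0, hpole₂.eventually_gt_atTop 0,
      eventually_eventually_nhdsWithin.mpr hwg, hwg] with t e1 e2 ht d1 d2 dg p1 p2 hev hwt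
    have p1 := norm_pos_iff.mp p1
    have p2 := norm_pos_iff.mp p2
    have hev' : w =ᶠ[𝓝 t] fun z => z ^ n * g z := by
      have : 𝓝[≠] (0 : ℂ) ≤ 𝓝[≠] 0 := le_rfl
      rw [IsOpen.nhdsWithin_eq isOpen_compl_singleton (by simpa using ht)] at hev
      filter_upwards [hev] with z hz
      simpa using hz
    have D1 : HasDerivAt w (-deriv f₁ t / f₁ t ^ 2 - -deriv f₂ t / f₂ t ^ 2) t :=
      (d1.differentiableAt.hasDerivAt.inv p1).sub (d2.differentiableAt.hasDerivAt.inv p2)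
    have D2 := ((hasDerivAt_zpow n t (Or.inl ht)).mul
      dg.differentiableAt.hasDerivAt).congr_of_eventuallyEq hev'
    have E := D1.unique D2
    have q1 : -deriv f₁ t / f₁ t ^ 2 = 1 + (f₁ t)⁻¹ * (-(η : ℂ) / t + r t) := by
      rw [show -deriv f₁ t = f₁ t ^ 2 + f₁ t * (-(η : ℂ) / t + r t) by linear_combination -e1]
      field_simp
    have q2 : -deriv f₂ t / f₂ t ^ 2 = 1 + (f₂ t)⁻¹ * (-(η : ℂ) / t + r t) := by
      rw [show -deriv f₂ t = f₂ t ^ 2 + f₂ t * (-(η : ℂ) / t + r t) by linear_combination -e2]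
      field_simp
    have hw' : (f₁ t)⁻¹ - (f₂ t)⁻¹ = t ^ n * g t := by simpa [hw] using hwt
    rw [q1, q2, zpow_sub_one₀ ht] at E
    have htn : t ^ n ≠ 0 := zpow_ne_zero n ht
    have ht1 : t * t⁻¹ = 1 := mul_inv_cancel₀ ht
    apply mul_left_cancel₀ htn
    rw [div_eq_mul_inv] at E
    linear_combination (-t) * E + t * (-(η : ℂ) * t⁻¹ + r t) * hw' +
      (-(n : ℂ) * t ^ n * g t - η * t ^ n * g t) * ht1
  have hc : ContinuousAt (fun t => (n : ℂ) * g t + t * deriv g t - g t * (t * r t - η)) 0 := by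
    have := hg.continuousAt
    have := hg.deriv.continuousAt
    have := hr.continuousAt
    fun_prop
  have hl := tendsto_nhds_unique (hc.tendsto.mono_left nhdsWithin_le_nhds)
    (tendsto_const_nhds.congr' (key.mono fun t ht => ht.symm))
  have hz : ((n : ℂ) + η) * g 0 = 0 := by linear_combination hl
  rcases mul_eq_zero.mp hz with h | h
  · have : n + (η : ℤ) = 0 := by exact_mod_cast h
    omega
  · exact hg0 h
end

section
/- Let x ∈ ℂ, let q be a function meromorphic at x with at most a simple pole at x, and let c ∈ ℂ be such that (t−x)·q(t) → −c as t → x. If f is meromorphic at x and satisfies f'(t) + f(t)² + f(t)·q(t) = 0 for all t in some punctured neighbourhood of x, then f has at most a simple pole at x, and the limit a := lim_{t→x} (t−x)·f(t) exists and satisfies a = 0 or a = c + 1. -/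
open Filter Topology

/-- a meromorphic solution of `f' + f² + f·q = 0`, where `q` has at
most a simple pole at `x` with residue `−c`, has at most a simple pole at `x`,
whose residue is `0` or `c + 1`. -/
theorem stmt_3 (x c : ℂ) (q f : ℂ → ℂ)
    (hq : MeromorphicAt q x)
    (hqc : Tendsto (fun t => (t - x) * q t) (𝓝[≠] x) (𝓝 (-c)))
    (hf : MeromorphicAt f x)
    (hRic : ∀ᶠ t in 𝓝[≠] x, deriv f t + f t ^ 2 + f t * q t = 0) :
    ∃ a : ℂ, Tendsto (fun t => (t - x) * f t) (𝓝[≠] x) (𝓝 a) ∧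
      (a = 0 ∨ a = c + 1) := by
  by_cases htop : meromorphicOrderAt f x = ⊤
  · refine ⟨0, ?_, Or.inl rfl⟩
    rw [meromorphicOrderAt_eq_top_iff] at htop
    refine tendsto_const_nhds.congr' ?_
    filter_upwards [htop] with t ht
    simp [ht]
  obtain ⟨n, hn⟩ := WithTop.ne_top_iff_exists.mp htop
  obtain ⟨g, hg, hgx, hfg⟩ := (meromorphicOrderAt_eq_int_iff hf).1 hn.symm
  simp only [smul_eq_mul] at hfg
  have hne : ∀ᶠ t in 𝓝[≠] x, t ≠ x := eventually_mem_nhdsWithin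
  have hgc : Tendsto g (𝓝[≠] x) (𝓝 (g x)) := hg.continuousAt.tendsto.mono_left nhdsWithin_le_nhds
  have hdgc : Tendsto (deriv g) (𝓝[≠] x) (𝓝 (deriv g x)) :=
    hg.deriv.continuousAt.tendsto.mono_left nhdsWithin_le_nhds
  have hsub : Tendsto (fun t => t - x) (𝓝[≠] x) (𝓝 0) := by
    have : ContinuousAt (fun t : ℂ => t - x) x := by fun_prop
    simpa using this.tendsto.mono_left (nhdsWithin_le_nhds (s := {x}ᶜ))
  have hpow : ∀ k : ℕ, k ≠ 0 → Tendsto (fun t => (t - x) ^ k) (𝓝[≠] x) (𝓝 0) := by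
    intro k hk
    simpa [hk] using hsub.pow k
  have hgne : ∀ᶠ t in 𝓝[≠] x, g t ≠ 0 := hgc.eventually_ne hgx
  have hga : ∀ᶠ t in 𝓝[≠] x, AnalyticAt ℂ g t := hg.eventually_analyticAt.filter_mono nhdsWithin_le_nhds
  have hlim : Tendsto (fun t => (t - x) * f t) (𝓝[≠] x) (𝓝 (c - n)) := by
    have h1 : Tendsto (fun t => -((n : ℂ) + (t - x) * (deriv g t / g t) + (t - x) * q t))
        (𝓝[≠] x) (𝓝 (-((n : ℂ) + 0 * (deriv g x / g x) + -c))) :=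
      ((tendsto_const_nhds.add (hsub.mul (hdgc.div hgc hgx))).add hqc).neg
    have h2 : -((n : ℂ) + 0 * (deriv g x / g x) + -c) = c - n := by ring
    rw [h2] at h1
    refine h1.congr' ?_
    filter_upwards [hRic, hne, hgne, hga, hfg, eventually_eventually_nhdsWithin.2 hfg]
      with t hR ht hgt hgat hft hev
    have ht' : t - x ≠ 0 := sub_ne_zero.2 ht
    have hEq : f =ᶠ[𝓝 t] fun z => (z - x) ^ n * g z := by
      rwa [nhdsWithin_eq_nhds.2 (isOpen_compl_singleton.mem_nhds ht)] at hev
    have hd : HasDerivAt (fun z => (z - x) ^ n * g z)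
        ((n * (t - x) ^ (n - 1) * 1) * g t + (t - x) ^ n * deriv g t) t := by
      have h3 : HasDerivAt (fun z : ℂ => (z - x) ^ n) (n * (t - x) ^ (n - 1) * 1) t :=
        HasDerivAt.comp (h₂ := fun y : ℂ => y ^ n) (h := fun z : ℂ => z - x) t
          (hasDerivAt_zpow n (t - x) (Or.inl ht')) ((hasDerivAt_id t).sub_const x)
      exact h3.mul hgat.differentiableAt.hasDerivAt
    rw [hEq.deriv_eq, hd.deriv, zpow_sub_one₀ ht'] at hR
    have hz : (t - x) ^ n ≠ 0 := zpow_ne_zero _ ht'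
    have hfne : f t ≠ 0 := by rw [hft]; exact mul_ne_zero hz hgt
    have key : (n : ℂ) + (t - x) * (deriv g t / g t) + (t - x) * f t + (t - x) * q t = 0 := by
      have : f t * ((n : ℂ) + (t - x) * (deriv g t / g t) + (t - x) * f t + (t - x) * q t)
        = (t - x) * (n * ((t - x) ^ n * (t - x)⁻¹) * 1 * g t + (t - x) ^ n * deriv g t
          + f t ^ 2 + f t * q t) := by
        rw [hft]
        field_simp
      rw [hR, mul_zero] at this
      exact (mul_eq_zero.1 this).resolve_left hfne
    linear_combination -key
  refine ⟨c - n, hlim, ?_⟩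
  rcases lt_trichotomy n (-1) with h | h | h
  · exfalso
    obtain ⟨k, hk⟩ := Int.eq_ofNat_of_zero_le (a := -(n + 1)) (by omega)
    have h4 := (hpow k (by omega)).mul hlim
    rw [zero_mul] at h4
    refine hgx (tendsto_nhds_unique (hgc.congr' ?_) h4)
    filter_upwards [hfg, hne] with t hft ht
    have ht' : t - x ≠ 0 := sub_ne_zero.2 ht
    have hn' : n = -((k + 1 : ℕ) : ℤ) := by push_cast; omega
    rw [hft, hn', zpow_neg, zpow_natCast]
    field_simp
    ring
  · right
    rw [h]; push_cast; ring
  · left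
    obtain ⟨k, hk⟩ := Int.eq_ofNat_of_zero_le (a := n) (by omega)
    have h4 := (hpow (k + 1) (by omega)).mul hgc
    rw [zero_mul] at h4
    refine tendsto_nhds_unique (hlim.congr' ?_) h4
    filter_upwards [hfg] with t hft
    rw [hft, hk]
    simp only [zpow_natCast]
    ring
end

section
/- Let f and q be functions meromorphic on all of ℂ such that the functions s ↦ f(1/s) and s ↦ q(1/s) are meromorphic at 0, let m ∈ ℂ be such that q(1/s)/s → −m as s → 0 (s ≠ 0), and suppose f'(t) + f(t)² + f(t)·q(t) = 0 holds for all t outside some finite subset of ℂ. Then f(1/s) → 0 as s → 0, and the limit a := lim_{s→0} f(1/s)/s exists and satisfies a = 0 or a = m + 1. -/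
open Filter Topology

/-- behaviour at infinity of a global meromorphic solution of
`f' + f² + f·q = 0`, where `q(t) = −m/t + O(1/t²)` at infinity:
`f(t) → 0` and `f(t) = a/t + O(1/t²)` with `a = 0` or `a = m + 1`. -/
theorem stmt_4 (f q : ℂ → ℂ) (m : ℂ)
    (hf : ∀ z : ℂ, MeromorphicAt f z) (hq : ∀ z : ℂ, MeromorphicAt q z)
    (hfinf : MeromorphicAt (fun s => f (1 / s)) 0)
    (hqinf : MeromorphicAt (fun s => q (1 / s)) 0)
    (hm : Tendsto (fun s => q (1 / s) / s) (𝓝[≠] (0 : ℂ)) (𝓝 (-m)))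
    (hRic : ∃ S : Finset ℂ, ∀ t : ℂ, t ∉ S →
      deriv f t + f t ^ 2 + f t * q t = 0) :
    Tendsto (fun s => f (1 / s)) (𝓝[≠] (0 : ℂ)) (𝓝 0) ∧
    ∃ a : ℂ, Tendsto (fun s => f (1 / s) / s) (𝓝[≠] (0 : ℂ)) (𝓝 a) ∧
      (a = 0 ∨ a = m + 1) := by
  obtain ⟨S, hS⟩ := hRic
  have hne : ∀ᶠ s : ℂ in 𝓝[≠] (0 : ℂ), s ≠ 0 := self_mem_nhdsWithin
  have hid : Tendsto (fun s : ℂ => s) (𝓝[≠] (0 : ℂ)) (𝓝 0) := nhdsWithin_le_nhds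
  by_cases htop : meromorphicOrderAt (fun s => f (1 / s)) 0 = ⊤
  · rw [meromorphicOrderAt_eq_top_iff] at htop
    refine ⟨?_, 0, ?_, Or.inl rfl⟩
    · refine tendsto_const_nhds.congr' ?_
      filter_upwards [htop] with s hs
      exact hs.symm
    · refine tendsto_const_nhds.congr' ?_
      filter_upwards [htop] with s hs
      rw [hs, zero_div]
  obtain ⟨g, hg, hg0, hfg⟩ := (meromorphicOrderAt_ne_top_iff hfinf).1 htop
  generalize (meromorphicOrderAt (fun s => f (1 / s)) 0).untop₀ = n at hfg
  simp only [sub_zero, smul_eq_mul] at hfg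
  have hSev : ∀ᶠ s : ℂ in 𝓝[≠] (0 : ℂ), s⁻¹ ∉ S := by
    have h1 : ∀ᶠ t : ℂ in Bornology.cobounded ℂ, t ∉ S := by
      have : (S : Set ℂ)ᶜ ∈ Bornology.cobounded ℂ := Bornology.isBounded_def.1 S.finite_toSet.isBounded
      filter_upwards [this] with t ht
      simpa using ht
    exact (tendsto_inv₀_nhdsNE_zero (α := ℂ)).eventually h1
  have hgne : ∀ᶠ s : ℂ in 𝓝[≠] (0 : ℂ), g s ≠ 0 :=
    (hg.continuousAt.eventually_ne hg0).filter_mono nhdsWithin_le_nhds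
  have hgan : ∀ᶠ s : ℂ in 𝓝[≠] (0 : ℂ), AnalyticAt ℂ g s :=
    hg.eventually_analyticAt.filter_mono nhdsWithin_le_nhds
  have hfg2 := eventually_eventually_nhdsWithin.2 hfg
  have key : ∀ᶠ s : ℂ in 𝓝[≠] (0 : ℂ),
      (n : ℂ) + s * (deriv g s / g s) - q (1 / s) / s = f (1 / s) / s := by
    filter_upwards [hne, hSev, hgne, hgan, hfg, hfg2] with s h0 hs hgs hga he hev
    have hev' : (fun s => f (1 / s)) =ᶠ[𝓝 s] fun s => s ^ n * g s := by
      rw [IsOpen.nhdsWithin_eq isOpen_compl_singleton h0] at hev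
      exact hev
    have hD : HasDerivAt (fun s => f (1 / s))
        ((n : ℂ) * s ^ (n - 1) * g s + s ^ n * deriv g s) s :=
      ((hasDerivAt_zpow n s (Or.inl h0)).mul hga.differentiableAt.hasDerivAt).congr_of_eventuallyEq
        hev'
    have hi : HasDerivAt (fun t : ℂ => t⁻¹) (-((s⁻¹) ^ 2)⁻¹) s⁻¹ := hasDerivAt_inv (inv_ne_zero h0)
    have hD' : HasDerivAt (fun s => f (1 / s))
        ((n : ℂ) * s ^ (n - 1) * g s + s ^ n * deriv g s) ((s⁻¹)⁻¹) := by rwa [inv_inv]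
    have hc := hD'.comp (s⁻¹) hi
    have hfe : (fun s => f (1 / s)) ∘ (fun t : ℂ => t⁻¹) = f := by
      funext t; simp
    rw [hfe] at hc
    have hR := hS _ hs
    rw [hc.deriv] at hR
    rw [one_div] at he ⊢
    rw [he] at hR ⊢
    rw [zpow_sub_one₀ h0] at hR
    have hsn : s ^ n ≠ 0 := zpow_ne_zero n h0
    generalize s ^ n = p at *
    have h2 : p * g s * (-(n * s + s ^ 2 * (deriv g s / g s)) + p * g s + q s⁻¹) = 0 := by
      rw [← hR]
      field_simp
    have h3 := (mul_eq_zero.1 h2).resolve_left (mul_ne_zero hsn hgs)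
    generalize q s⁻¹ = Q at *
    generalize deriv g s / g s = L at *
    field_simp
    linear_combination -h3
  have hL : Tendsto (fun s => f (1 / s) / s) (𝓝[≠] (0 : ℂ)) (𝓝 ((n : ℂ) + m)) := by
    have hgd : Tendsto (fun s => deriv g s / g s) (𝓝[≠] (0 : ℂ)) (𝓝 (deriv g 0 / g 0)) :=
      (hg.deriv.continuousAt.tendsto.div hg.continuousAt.tendsto hg0).mono_left nhdsWithin_le_nhds
    have := ((tendsto_const_nhds (x := (n : ℂ))).add (hid.mul hgd)).sub hm
    simp only [zero_mul, add_zero, sub_neg_eq_add] at this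
    exact this.congr' key
  have hF0 : Tendsto (fun s => f (1 / s)) (𝓝[≠] (0 : ℂ)) (𝓝 0) := by
    have := hL.mul hid
    rw [mul_zero] at this
    refine this.congr' ?_
    filter_upwards [hne] with s h0
    field_simp
  have hgt : Tendsto g (𝓝[≠] (0 : ℂ)) (𝓝 (g 0)) :=
    hg.continuousAt.tendsto.mono_left nhdsWithin_le_nhds
  have hpow : ∀ k : ℕ, k ≠ 0 → Tendsto (fun s : ℂ => s ^ k) (𝓝[≠] (0 : ℂ)) (𝓝 0) := by
    intro k hk
    have := hid.pow k
    rwa [zero_pow hk] at this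
  refine ⟨hF0, _, hL, ?_⟩
  rcases lt_trichotomy n 1 with hn | hn | hn
  · exfalso
    obtain ⟨k, hk⟩ := Int.eq_ofNat_of_zero_le (show 0 ≤ 1 - n by omega)
    have h1 := hL.mul (hpow k (by omega))
    rw [mul_zero] at h1
    refine hg0 (tendsto_nhds_unique (hgt.congr' ?_) h1)
    filter_upwards [hne, hfg] with s h0 he
    rw [he, ← zpow_natCast s k, ← hk, zpow_sub₀ h0, zpow_one]
    have := zpow_ne_zero n h0
    field_simp
  · right; rw [hn]; push_cast; ring
  · left
    obtain ⟨k, hk⟩ := Int.eq_ofNat_of_zero_le (show 0 ≤ n - 1 by omega)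
    have h1 := (hpow k (by omega)).mul hgt
    rw [zero_mul] at h1
    refine tendsto_nhds_unique hL (h1.congr' ?_)
    filter_upwards [hne, hfg] with s h0 he
    rw [he, ← zpow_natCast s k, ← hk, zpow_sub₀ h0, zpow_one]
    field_simp
end

section
/- Let f and q be functions meromorphic on all of ℂ such that s ↦ f(1/s) and s ↦ q(1/s) are meromorphic at 0, let m ∈ ℝ with m ≥ −1 be such that q(1/s)/s → −m as s → 0 (s ≠ 0), and suppose f'(t) + f(t)² + f(t)·q(t) = 0 holds for all t outside some finite subset of ℂ. If f(1/s)/s → 0 as s → 0 (i.e. f(t) = O(1/t²) at infinity), then f vanishes identically outside its polar set; in particular, if f is not identically zero then lim_{s→0} f(1/s)/s = m + 1. -/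
open Filter Topology

lemma aux_zero_s5 (f : ℂ → ℂ) (hf : ∀ z : ℂ, MeromorphicAt f z)
    (h0 : ∀ᶠ s in 𝓝[≠] (0 : ℂ), f (1 / s) = 0) :
    ∀ z : ℂ, AnalyticAt ℂ f z → f z = 0 := by
  have h1 : ∀ᶠ s in 𝓝[≠] (0 : ℂ), ∀ᶠ r in 𝓝 s, f (1 / r) = 0 := by
    have h2 := eventually_eventually_nhdsWithin.2 h0
    filter_upwards [h2, self_mem_nhdsWithin] with s hs hs0
    rwa [IsOpen.nhdsWithin_eq isOpen_compl_singleton hs0] at hs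
  obtain ⟨s, hs, hs0⟩ := (h1.and self_mem_nhdsWithin).exists
  have hs0 : s ≠ 0 := hs0
  have hinv : Tendsto (fun t : ℂ => t⁻¹) (𝓝 s⁻¹) (𝓝 s) := by
    have := tendsto_inv₀ (inv_ne_zero hs0)
    rwa [inv_inv] at this
  have h3 : ∀ᶠ t in 𝓝 s⁻¹, f t = 0 := by
    filter_upwards [hinv.eventually hs] with t ht
    simpa using ht
  have htop : meromorphicOrderAt f s⁻¹ = ⊤ :=
    meromorphicOrderAt_eq_top_iff.2 (h3.filter_mono nhdsWithin_le_nhds)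
  intro z hz
  have hz' : meromorphicOrderAt f z = ⊤ := by
    by_contra hne
    have hM : MeromorphicOn f Set.univ := fun x _ => hf x
    exact hM.meromorphicOrderAt_ne_top_of_isPreconnected (x := z) (y := s⁻¹)
      isPreconnected_univ (Set.mem_univ _) (Set.mem_univ _) hne htop
  rw [meromorphicOrderAt_eq_top_iff] at hz'
  have hc : Tendsto f (𝓝[≠] z) (𝓝 (f z)) := hz.continuousAt.tendsto.mono_left nhdsWithin_le_nhds
  have hc' : Tendsto f (𝓝[≠] z) (𝓝 0) :=
    (tendsto_const_nhds).congr' (by filter_upwards [hz'] with x hx using hx.symm)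
  exact tendsto_nhds_unique hc hc'

lemma aux_main (f q : ℂ → ℂ) (m : ℝ) (hm' : -1 ≤ m)
    (hfinf : MeromorphicAt (fun s => f (1 / s)) 0)
    (hm : Tendsto (fun s => q (1 / s) / s) (𝓝[≠] (0 : ℂ)) (𝓝 (-(m : ℂ))))
    (hRic : ∃ S : Finset ℂ, ∀ t : ℂ, t ∉ S →
      deriv f t + f t ^ 2 + f t * q t = 0)
    (h0 : ¬ ∀ᶠ s in 𝓝[≠] (0 : ℂ), f (1 / s) = 0) :
    (m : ℂ) + 1 ≠ 0 ∧
      Tendsto (fun s => f (1 / s) / s) (𝓝[≠] (0 : ℂ)) (𝓝 ((m : ℂ) + 1)) := by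
  obtain ⟨S, hS⟩ := hRic
  have hne : meromorphicOrderAt (fun s => f (1 / s)) 0 ≠ ⊤ := fun h =>
    h0 (meromorphicOrderAt_eq_top_iff.1 h)
  obtain ⟨n, hn⟩ := WithTop.ne_top_iff_exists.1 hne
  obtain ⟨h, hh, hh0, hgh⟩ := (meromorphicOrderAt_eq_int_iff hfinf).1 hn.symm
  simp only [sub_zero, smul_eq_mul] at hgh
  have hS' : ∀ᶠ s in 𝓝[≠] (0 : ℂ), s⁻¹ ∉ S := by
    have := tendsto_inv₀_nhdsNE_zero (α := ℂ)
    exact this.eventually (S.finite_toSet.isBounded)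
  have hghloc : ∀ᶠ s in 𝓝[≠] (0 : ℂ), ∀ᶠ r in 𝓝 s, f (1 / r) = r ^ n * h r := by
    have h2 := eventually_eventually_nhdsWithin.2 hgh
    filter_upwards [h2, self_mem_nhdsWithin] with s hs hs0
    rwa [IsOpen.nhdsWithin_eq isOpen_compl_singleton hs0] at hs
  have hhan : ∀ᶠ s in 𝓝[≠] (0 : ℂ), AnalyticAt ℂ h s :=
    hh.eventually_analyticAt.filter_mono nhdsWithin_le_nhds
  have hhne : ∀ᶠ s in 𝓝[≠] (0 : ℂ), h s ≠ 0 :=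
    (hh.continuousAt.eventually_ne hh0).filter_mono nhdsWithin_le_nhds
  have hcont : Tendsto h (𝓝[≠] 0) (𝓝 (h 0)) :=
    hh.continuousAt.tendsto.mono_left nhdsWithin_le_nhds
  have hid : Tendsto (fun s : ℂ => s) (𝓝[≠] 0) (𝓝 0) := tendsto_id.mono_left nhdsWithin_le_nhds
  have hdcont : Tendsto (deriv h) (𝓝[≠] 0) (𝓝 (deriv h 0)) :=
    hh.deriv.continuousAt.tendsto.mono_left nhdsWithin_le_nhds
  have key : ∀ᶠ s in 𝓝[≠] (0 : ℂ),
      n + s * (deriv h s / h s) - q (1 / s) / s = f (1 / s) / s := by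
    filter_upwards [hS', hghloc, hhan, hhne, self_mem_nhdsWithin] with s h1 h2 h3 h4 h5
    have h5 : s ≠ 0 := h5
    have hgd : HasDerivAt (fun r : ℂ => r ^ n * h r)
        (n * s ^ (n - 1) * h s + s ^ n * deriv h s) s :=
      (hasDerivAt_zpow n s (Or.inl h5)).mul h3.differentiableAt.hasDerivAt
    have hgd2 : HasDerivAt (fun r : ℂ => f (1 / r))
        (n * s ^ (n - 1) * h s + s ^ n * deriv h s) s := hgd.congr_of_eventuallyEq h2
    have hfd : HasDerivAt f
        ((n * s ^ (n - 1) * h s + s ^ n * deriv h s) * (-(s ^ 2))) s⁻¹ := by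
      have hi : HasDerivAt (fun t : ℂ => t⁻¹) (-(s ^ 2)) s⁻¹ := by
        have := hasDerivAt_inv (inv_ne_zero h5)
        simpa using this
      have h6 : HasDerivAt (fun r : ℂ => f (1 / r))
        (n * s ^ (n - 1) * h s + s ^ n * deriv h s) ((fun t : ℂ => t⁻¹) s⁻¹) := by
        simpa using hgd2
      have := h6.comp s⁻¹ hi
      refine this.congr_of_eventuallyEq (Eventually.of_forall fun t => ?_)
      simp
    have h7 := hS _ h1
    have h8 := h2.self_of_nhds
    rw [one_div] at h8 ⊢
    rw [hfd.deriv, h8, zpow_sub_one₀ h5] at h7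
    rw [h8]
    have hz : s ^ n ≠ 0 := zpow_ne_zero _ h5
    generalize s ^ n = w at *
    field_simp at h7 ⊢
    have : w * s * h s ≠ 0 := by simp [*]
    grind
  have hL : Tendsto (fun s => f (1 / s) / s) (𝓝[≠] (0 : ℂ)) (𝓝 (n + m)) := by
    refine Tendsto.congr' key ?_
    have := (tendsto_const_nhds (x := (n : ℂ))).add (hid.mul (hdcont.div hcont hh0)) |>.sub hm
    simpa using this
  have hf2 : ∀ᶠ s in 𝓝[≠] (0 : ℂ), f (1 / s) / s = s ^ (n - 1) * h s := by
    filter_upwards [hgh, self_mem_nhdsWithin] with s h1 h2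
    rw [h1, zpow_sub_one₀ h2]; ring
  rcases lt_trichotomy n 1 with hlt | rfl | hgt
  · exfalso
    obtain ⟨k, hk⟩ : ∃ k : ℕ, 1 - n = ((k + 1 : ℕ) : ℤ) := ⟨(-n).toNat, by omega⟩
    have : Tendsto h (𝓝[≠] 0) (𝓝 0) := by
      have h1 := (hid.pow (k + 1)).mul hL
      simp only [ne_eq, Nat.add_eq_zero_iff, one_ne_zero, and_false, not_false_eq_true,
        zero_pow, zero_mul] at h1
      refine h1.congr' ?_
      filter_upwards [hf2, self_mem_nhdsWithin] with s h2 h3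
      rw [h2, ← zpow_natCast, ← hk, ← mul_assoc, ← zpow_add₀ h3]
      simp
    exact hh0 (tendsto_nhds_unique hcont this)
  · have : Tendsto h (𝓝[≠] 0) (𝓝 (m + 1)) := by
      have h1 := hL.congr' hf2
      simpa [add_comm] using h1
    refine ⟨?_, by simpa [add_comm] using hL⟩
    rw [← tendsto_nhds_unique hcont this]
    exact hh0
  · exfalso
    obtain ⟨k, hk⟩ : ∃ k : ℕ, n - 1 = ((k + 1 : ℕ) : ℤ) := ⟨(n - 2).toNat, by omega⟩
    have h1 := ((hid.pow (k + 1)).mul hcont)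
    simp only [ne_eq, Nat.add_eq_zero_iff, one_ne_zero, and_false, not_false_eq_true,
        zero_pow, zero_mul] at h1
    have h2 := hL.congr' hf2
    rw [hk] at h2
    simp only [zpow_natCast] at h2
    have h3 := tendsto_nhds_unique h1 h2
    have h4 : (n : ℝ) + m = 0 := by exact_mod_cast h3.symm
    have h5 : (2 : ℝ) ≤ n := by exact_mod_cast hgt
    linarith

/-- a global meromorphic solution of `f' + f² + f·q = 0` with
`q(t) = −m/t + O(1/t²)` at infinity, `m ≥ −1`, and `f(t) = O(1/t²)` at infinity
vanishes identically outside its polar set; in particular a nonzero solution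
satisfies `f(t) = (m+1)/t + O(1/t²)` at infinity. -/
theorem stmt_5 (f q : ℂ → ℂ) (m : ℝ) (hm' : -1 ≤ m)
    (hf : ∀ z : ℂ, MeromorphicAt f z) (hq : ∀ z : ℂ, MeromorphicAt q z)
    (hfinf : MeromorphicAt (fun s => f (1 / s)) 0)
    (hqinf : MeromorphicAt (fun s => q (1 / s)) 0)
    (hm : Tendsto (fun s => q (1 / s) / s) (𝓝[≠] (0 : ℂ)) (𝓝 (-(m : ℂ))))
    (hRic : ∃ S : Finset ℂ, ∀ t : ℂ, t ∉ S →
      deriv f t + f t ^ 2 + f t * q t = 0) :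
    (Tendsto (fun s => f (1 / s) / s) (𝓝[≠] (0 : ℂ)) (𝓝 0) →
      ∀ z : ℂ, AnalyticAt ℂ f z → f z = 0) ∧
    ((¬ ∀ z : ℂ, AnalyticAt ℂ f z → f z = 0) →
      Tendsto (fun s => f (1 / s) / s) (𝓝[≠] (0 : ℂ)) (𝓝 ((m : ℂ) + 1))) := by
  constructor
  · intro hT
    by_cases h0 : ∀ᶠ s in 𝓝[≠] (0 : ℂ), f (1 / s) = 0
    · exact aux_zero_s5 f hf h0
    · obtain ⟨h1, h2⟩ := aux_main f q m hm' hfinf hm hRic h0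
      exact absurd (tendsto_nhds_unique h2 hT) h1
  · intro hN
    exact (aux_main f q m hm' hfinf hm hRic (fun h0 => hN (aux_zero_s5 f hf h0))).2
end

section
/- Let η ∈ ℤ≥0, let r : ℂ → ℂ be analytic at 0, set q(t) := −η/t + r(t), and let ω₀ ∈ ℂ× satisfy ω₀·q(ω₀ t) = q(t) for all t in some punctured neighbourhood of 0. Let f be analytic at 0, not identically zero on any neighbourhood of 0, and satisfy the Riccati equation f'(t) + f(t)² + f(t)·q(t) = 0 on a punctured neighbourhood of 0. Then the equivariance relation ω₀·f(ω₀ t) = f(t) holds for all t in some neighbourhood of 0 if and only if ω₀^{η+1} = 1. -/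
open Filter Topology

/-- The singular coefficient function `q(t) = −η/t + r(t)` of the Riccati equation. -/
noncomputable def riccatiQ (η : ℕ) (r : ℂ → ℂ) (t : ℂ) : ℂ := -(η : ℂ) / t + r t

/-- two functions continuous at `0` agreeing near `0` off `0` agree at `0`. -/
theorem eq_zero_at_of_punctured (F : ℂ → ℂ) (hF : ContinuousAt F 0)
    (h : ∀ᶠ t in 𝓝[≠] (0 : ℂ), F t = 0) : F 0 = 0 := by
  have h1 : Tendsto F (𝓝[≠] (0 : ℂ)) (𝓝 (F 0)) := hF.tendsto.mono_left nhdsWithin_le_nhds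
  have h2 : Tendsto F (𝓝[≠] (0 : ℂ)) (𝓝 0) :=
    Tendsto.congr' (by filter_upwards [h] with t ht using ht.symm) tendsto_const_nhds
  exact tendsto_nhds_unique h1 h2

theorem order_lemma (η : ℕ) (u s : ℂ → ℂ) (hu : AnalyticAt ℂ u 0) (hs : ContinuousAt s 0)
    (hne : ¬ ∀ᶠ t in 𝓝 (0 : ℂ), u t = 0)
    (hode : ∀ᶠ t in 𝓝[≠] (0 : ℂ), t * deriv u t = u t * (η + t * s t)) :
    ∃ g : ℂ → ℂ, AnalyticAt ℂ g 0 ∧ g 0 ≠ 0 ∧ ∀ᶠ t in 𝓝 (0 : ℂ), u t = t ^ η * g t := by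
  obtain ⟨n, g, hg, hg0, hug⟩ := hu.exists_eventuallyEq_pow_smul_nonzero_iff.mpr hne
  simp only [sub_zero, smul_eq_mul] at hug
  have key : ∀ᶠ t in 𝓝[≠] (0 : ℂ),
      ((n : ℂ) - η) * g t + t * (deriv g t - s t * g t) = 0 := by
    filter_upwards [hode, hug.eventually_nhds.filter_mono nhdsWithin_le_nhds,
      hg.eventually_analyticAt.filter_mono nhdsWithin_le_nhds,
      self_mem_nhdsWithin] with t ht hut hgt ht0
    have ht0 : t ≠ 0 := ht0
    have hd : deriv u t = n * t ^ (n - 1) * g t + t ^ n * deriv g t := by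
      have h1 : u =ᶠ[𝓝 t] fun t => t ^ n * g t := hut
      rw [h1.deriv_eq]
      exact ((hasDerivAt_pow n t).mul hgt.differentiableAt.hasDerivAt).deriv
    rw [hd, hut.self_of_nhds] at ht
    have hp : (n : ℂ) * (t * t ^ (n - 1)) = n * t ^ n := by
      cases n with
      | zero => simp
      | succ k => simp [pow_succ']
    have : t ^ n * (((n : ℂ) - η) * g t + t * (deriv g t - s t * g t)) = 0 := by
      linear_combination ht - g t * hp
    exact (mul_eq_zero.mp this).resolve_left (pow_ne_zero _ ht0)
  have h0 := eq_zero_at_of_punctured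
    (fun t => ((n : ℂ) - η) * g t + t * (deriv g t - s t * g t))
    (by
      have := hg.continuousAt
      have := hg.deriv.continuousAt
      fun_prop) key
  simp only [zero_mul, add_zero] at h0
  have hn : n = η := by
    have := (mul_eq_zero.mp h0).resolve_right hg0
    exact_mod_cast sub_eq_zero.mp this
  subst hn
  exact ⟨g, hg, hg0, hug⟩

/-- for an analytic, not identically zero, solution `f` of the Riccati
equation with `ω₀`-equivariant coefficient `q`, the equivariance
`ω₀·f(ω₀t) = f(t)` holds iff `ω₀^(η+1) = 1`. -/
theorem stmt_6 (η : ℕ) (r f : ℂ → ℂ) (ω₀ : ℂ) (hω₀ : ω₀ ≠ 0)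
    (hr : AnalyticAt ℂ r 0)
    (hq : ∀ᶠ t in 𝓝[≠] (0 : ℂ), ω₀ * riccatiQ η r (ω₀ * t) = riccatiQ η r t)
    (hf : AnalyticAt ℂ f 0)
    (hfne : ¬ ∀ᶠ t in 𝓝 (0 : ℂ), f t = 0)
    (hRic : ∀ᶠ t in 𝓝[≠] (0 : ℂ),
      deriv f t + f t ^ 2 + f t * riccatiQ η r t = 0) :
    (∀ᶠ t in 𝓝 (0 : ℂ), ω₀ * f (ω₀ * t) = f t) ↔ ω₀ ^ (η + 1) = 1 := by
  have hmul : Tendsto (fun t : ℂ => ω₀ * t) (𝓝 0) (𝓝 0) := by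
    have : ContinuousAt (fun t : ℂ => ω₀ * t) 0 := by fun_prop
    simpa [ContinuousAt] using this
  have hmul' : Tendsto (fun t : ℂ => ω₀ * t) (𝓝[≠] 0) (𝓝[≠] 0) := by
    refine tendsto_nhdsWithin_iff.mpr ⟨hmul.mono_left nhdsWithin_le_nhds, ?_⟩
    filter_upwards [self_mem_nhdsWithin] with t ht
    exact mul_ne_zero hω₀ ht
  obtain ⟨g, hg, hg0, hfg⟩ := order_lemma η f (fun t => -(r t + f t)) hf
    (by have := hr.continuousAt; have := hf.continuousAt; fun_prop) hfne (by
      filter_upwards [hRic, self_mem_nhdsWithin] with t ht ht0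
      have ht0 : t ≠ 0 := ht0
      simp only [riccatiQ] at ht
      field_simp at ht
      linear_combination ht)
  have hgc : ContinuousAt g 0 := hg.continuousAt
  have hgc' : ContinuousAt (fun t => g (ω₀ * t)) 0 :=
    ContinuousAt.comp (f := fun t => ω₀ * t) (by simpa using hgc) (by fun_prop)
  have hfa' : AnalyticAt ℂ (fun t => f (ω₀ * t)) 0 :=
    AnalyticAt.fun_comp (f := fun t => ω₀ * t) (by simpa using hf) (by fun_prop)
  constructor
  · intro h
    have h0 := eq_zero_at_of_punctured (fun t => ω₀ ^ (η + 1) * g (ω₀ * t) - g t)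
      ((continuousAt_const.mul hgc').sub hgc) (by
        filter_upwards [h.filter_mono nhdsWithin_le_nhds, hfg.filter_mono nhdsWithin_le_nhds,
          (hmul.eventually hfg).filter_mono nhdsWithin_le_nhds, self_mem_nhdsWithin]
          with t h1 h2 h3 ht0
        have ht0 : t ≠ 0 := ht0
        rw [h2, h3] at h1
        refine (mul_eq_zero.mp (?_ : t ^ η * _ = 0)).resolve_left (pow_ne_zero η ht0)
        rw [mul_pow] at h1
        linear_combination h1)
    simp only [mul_zero] at h0
    have : (ω₀ ^ (η + 1) - 1) * g 0 = 0 := by linear_combination h0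
    exact sub_eq_zero.mp ((mul_eq_zero.mp this).resolve_right hg0)
  · intro hω
    by_contra hcon
    have hda : AnalyticAt ℂ (fun t => f t - ω₀ * f (ω₀ * t)) 0 :=
      hf.sub (analyticAt_const.mul hfa')
    obtain ⟨w, hw, hw0, hdw⟩ := order_lemma η (fun t => f t - ω₀ * f (ω₀ * t))
      (fun t => -(r t + f t + ω₀ * f (ω₀ * t))) hda
      ((hr.continuousAt.add hf.continuousAt).add
        (continuousAt_const.mul hfa'.continuousAt)).neg
      (fun h => hcon (by filter_upwards [h] with t ht using (sub_eq_zero.mp ht).symm)) (by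
        filter_upwards [hRic, hmul'.eventually hRic, hq, self_mem_nhdsWithin,
          hf.eventually_analyticAt.filter_mono nhdsWithin_le_nhds,
          (hmul.eventually hf.eventually_analyticAt).filter_mono nhdsWithin_le_nhds]
          with t h1 h2 h3 ht0 ha hb
        have ht0 : t ≠ 0 := ht0
        have hd : deriv (fun t => f t - ω₀ * f (ω₀ * t)) t
            = deriv f t - ω₀ * (deriv f (ω₀ * t) * ω₀) := by
          have e1 : HasDerivAt (fun t => ω₀ * t) ω₀ t := by
            simpa using (hasDerivAt_id t).const_mul ω₀
          have e2 : HasDerivAt (fun t => f (ω₀ * t)) (deriv f (ω₀ * t) * ω₀) t :=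
            HasDerivAt.comp t hb.differentiableAt.hasDerivAt e1
          exact (ha.differentiableAt.hasDerivAt.sub (e2.const_mul ω₀)).deriv
        have hQ : t * riccatiQ η r t = -η + t * r t := by
          simp only [riccatiQ]
          field_simp
        rw [hd]
        linear_combination t * h1 - t * ω₀ ^ 2 * h2 + t * ω₀ * f (ω₀ * t) * h3
          - (f t - ω₀ * f (ω₀ * t)) * hQ)
    have h0 := eq_zero_at_of_punctured (fun t => w t - (g t - ω₀ ^ (η + 1) * g (ω₀ * t)))
      (hw.continuousAt.sub (hgc.sub (continuousAt_const.mul hgc'))) (by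
        filter_upwards [hdw.filter_mono nhdsWithin_le_nhds, hfg.filter_mono nhdsWithin_le_nhds,
          (hmul.eventually hfg).filter_mono nhdsWithin_le_nhds, self_mem_nhdsWithin]
          with t h1 h2 h3 ht0
        have ht0 : t ≠ 0 := ht0
        rw [h2, h3] at h1
        refine (mul_eq_zero.mp (?_ : t ^ η * _ = 0)).resolve_left (pow_ne_zero η ht0)
        rw [mul_pow] at h1
        linear_combination -h1)
    simp only [mul_zero, hω, one_mul, sub_self, sub_zero] at h0
    exact hw0 h0
end

section
/- Let η ∈ ℤ≥0, let r : ℂ → ℂ be analytic at 0, set q(t) := −η/t + r(t), and let ω₀ ∈ ℂ× satisfy ω₀·q(ω₀ t) = q(t) for all t in some punctured neighbourhood of 0. Let f be meromorphic at 0 with a pole at 0, satisfying the Riccati equation f'(t) + f(t)² + f(t)·q(t) = 0 on a punctured neighbourhood of 0. Then the equivariance relation ω₀·f(ω₀ t) = f(t) holds automatically for all t in some punctured neighbourhood of 0, with no condition on ω₀ or η. -/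
open Filter Topology

/-- An analytic solution of the linear equation (derivative of d equals q d) vanishing at `0` vanishes identically near `0`. -/
theorem riccati_linear_unique (η : ℕ) (r d : ℂ → ℂ) (hr : AnalyticAt ℂ r 0)
    (hd : AnalyticAt ℂ d 0) (hd0 : d 0 = 0)
    (hode : ∀ᶠ t in 𝓝[≠] (0 : ℂ), deriv d t = riccatiQ η r t * d t) :
    ∀ᶠ t in 𝓝 (0 : ℂ), d t = 0 := by
  by_contra hne
  obtain ⟨n, e, he, he0, hde⟩ := hd.exists_eventuallyEq_pow_smul_nonzero_iff.mpr hne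
  have hn : n ≠ 0 := by
    rintro rfl
    have := hde.self_of_nhds
    simp [hd0] at this
    exact he0 this.symm
  obtain ⟨m, rfl⟩ := Nat.exists_eq_succ_of_ne_zero hn
  have key : ∀ᶠ t in 𝓝[≠] (0 : ℂ),
      ((m + 1 : ℂ) + η) * e t + t * (deriv e t - r t * e t) = 0 := by
    filter_upwards [hode, hde.eventually_nhds.filter_mono nhdsWithin_le_nhds,
      he.eventually_analyticAt.filter_mono nhdsWithin_le_nhds, self_mem_nhdsWithin]
      with t h1 h2 h3 h4
    have ht : t ≠ 0 := h4
    have h5 : d =ᶠ[𝓝 t] fun z => z ^ (m + 1) * e z := by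
      filter_upwards [h2] with z hz
      simpa using hz
    have h6 : HasDerivAt (fun z => z ^ (m + 1) * e z)
        (((m + 1 : ℕ) : ℂ) * t ^ m * e t + t ^ (m + 1) * deriv e t) t := by
      have h := (hasDerivAt_pow (m + 1) t).mul h3.differentiableAt.hasDerivAt
      exact h
    rw [h5.deriv_eq, h6.deriv, h5.self_of_nhds, riccatiQ] at h1
    beta_reduce at h1
    have h7 : t ^ m ≠ 0 := pow_ne_zero _ ht
    apply mul_left_cancel₀ h7
    have h8 : (-(η : ℂ) / t + r t) * (t ^ (m + 1) * e t)
        = t ^ m * ((-(η : ℂ) + t * r t) * e t) := by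
      field_simp
      ring
    rw [h8] at h1
    push_cast at h1
    linear_combination h1
  have hc : ContinuousAt (fun t => ((m + 1 : ℂ) + η) * e t + t * (deriv e t - r t * e t)) 0 := by
    have := he.continuousAt
    have := he.deriv.continuousAt
    have := hr.continuousAt
    fun_prop
  have hlim := hc.tendsto.mono_left (nhdsWithin_le_nhds (s := {0}ᶜ))
  have hlim0 := (tendsto_congr' key).mp hlim
  have h0 := tendsto_nhds_unique hlim0 tendsto_const_nhds
  simp only [zero_mul, add_zero, mul_eq_zero, he0, or_false] at h0
  have : ((m + 1 + η : ℕ) : ℂ) = 0 := by push_cast; exact h0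
  have := Nat.cast_eq_zero.mp this
  omega

/-- for a singular (pole at 0) meromorphic solution `f` of the Riccati
equation with `ω₀`-equivariant coefficient `q`, the equivariance
`ω₀·f(ω₀t) = f(t)` holds automatically. -/
theorem stmt_7 (η : ℕ) (r f : ℂ → ℂ) (ω₀ : ℂ) (hω₀ : ω₀ ≠ 0)
    (hr : AnalyticAt ℂ r 0)
    (hq : ∀ᶠ t in 𝓝[≠] (0 : ℂ), ω₀ * riccatiQ η r (ω₀ * t) = riccatiQ η r t)
    (hf : MeromorphicAt f 0)
    (hpole : Tendsto (fun t => ‖f t‖) (𝓝[≠] (0 : ℂ)) atTop)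
    (hRic : ∀ᶠ t in 𝓝[≠] (0 : ℂ),
      deriv f t + f t ^ 2 + f t * riccatiQ η r t = 0) :
    ∀ᶠ t in 𝓝[≠] (0 : ℂ), ω₀ * f (ω₀ * t) = f t := by
  set g : ℂ → ℂ := Function.update (fun t => (f t)⁻¹) 0 0 with hg
  have hg0 : g 0 = 0 := by simp [hg]
  have hgne : ∀ t, t ≠ 0 → g t = (f t)⁻¹ := fun t ht => by simp [hg, ht]
  have hfne : ∀ᶠ t in 𝓝[≠] (0 : ℂ), f t ≠ 0 := by
    filter_upwards [hpole.eventually_gt_atTop 0] with t ht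
    exact norm_pos_iff.mp ht
  have hgd : ∀ᶠ t in 𝓝[≠] (0 : ℂ), HasDerivAt g (1 + riccatiQ η r t * g t) t := by
    filter_upwards [hfne, hf.eventually_analyticAt, hRic, self_mem_nhdsWithin] with t h1 h2 h3 h4
    have ht : t ≠ 0 := h4
    have h5 : g =ᶠ[𝓝 t] fun t => (f t)⁻¹ := by
      filter_upwards [isOpen_ne.mem_nhds ht] with z hz
      exact hgne z hz
    have h6 := (h2.differentiableAt.hasDerivAt.inv h1).congr_of_eventuallyEq h5
    have h7 : 1 + riccatiQ η r t * g t = -deriv f t / f t ^ 2 := by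
      rw [hgne t ht]
      field_simp
      linear_combination h3
    rw [h7]
    exact h6
  have hgc : ContinuousAt g 0 := by
    rw [hg, continuousAt_update_same]
    apply tendsto_zero_iff_norm_tendsto_zero.mpr
    simp only [norm_inv]
    exact hpole.inv_tendsto_atTop
  have hga : AnalyticAt ℂ g 0 :=
    Complex.analyticAt_of_differentiable_on_punctured_nhds_of_continuousAt
      (hgd.mono fun t h => h.differentiableAt) hgc
  have hmul : Tendsto (fun t : ℂ => ω₀ * t) (𝓝[≠] 0) (𝓝[≠] 0) := by
    apply tendsto_nhdsWithin_of_tendsto_nhds_of_eventually_within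
    · have : ContinuousAt (fun t : ℂ => ω₀ * t) 0 := by fun_prop
      simpa using this.tendsto.mono_left (nhdsWithin_le_nhds (s := {0}ᶜ))
    · filter_upwards [self_mem_nhdsWithin] with t ht
      exact mul_ne_zero hω₀ ht
  have hha : AnalyticAt ℂ (fun t => g (ω₀ * t) / ω₀) 0 := by
    have h1 : AnalyticAt ℂ (fun t : ℂ => ω₀ * t) 0 := by fun_prop
    have h2 : AnalyticAt ℂ g (ω₀ * 0) := by simpa using hga
    have h3 : AnalyticAt ℂ (fun t => g (ω₀ * t)) 0 := AnalyticAt.fun_comp h2 h1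
    exact h3.div analyticAt_const hω₀
  have hd := riccati_linear_unique η r (fun t => g t - g (ω₀ * t) / ω₀) hr (hga.sub hha)
    (by simp [hg0]) (by
      filter_upwards [hgd, hmul.eventually hgd, hq] with t h1 h2 h3
      have h4 : HasDerivAt (fun t => ω₀ * t) ω₀ t := by
        simpa using (hasDerivAt_id t).const_mul ω₀
      have h5 := h1.sub ((h2.comp t h4).div_const ω₀)
      have h6 := h5.deriv
      refine Eq.trans h6 ?_
      rw [← h3]
      field_simp
      ring)
  filter_upwards [hd.filter_mono nhdsWithin_le_nhds, hfne, hmul.eventually hfne,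
    self_mem_nhdsWithin] with t h1 h2 h3 h4
  have ht : t ≠ 0 := h4
  rw [hgne t ht, hgne _ (mul_ne_zero hω₀ ht)] at h1
  field_simp at h1
  linear_combination h1
end

section
/- Let f₁, f₂, f₃ be functions meromorphic at 0 satisfying the coupled Riccati system on a punctured neighbourhood of 0. Then f₁ and f₂ have at most simple poles at 0 and f₃ has at most a double pole at 0; moreover, setting a := lim_{t→0} t·f₁(t), b := lim_{t→0} t·f₂(t) and c := lim_{t→0} t²·f₃(t) (all of which exist), and writing μ := η+1, the triple (a,b,c) is one of the six triples (0,0,0), (2μ,0,0), (μ/2, μ/2, 0), (μ/2, −μ/2, 0), (3μ/2, μ/2, μ²), (3μ/2, −μ/2, −μ²). -/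
open Filter Topology

/-- The coupled Riccati system associated to the data (η, r, r̄), imposed on a
punctured neighbourhood of the origin. -/
def CoupledRiccatiSystem (η : ℕ) (r rb f₁ f₂ f₃ : ℂ → ℂ) : Prop :=
  ∀ᶠ t in 𝓝[≠] (0 : ℂ),
    2 * deriv f₁ t + f₁ t ^ 2 + 3 * f₂ t ^ 2
      + (riccatiQ η r t + riccatiQ η rb t) * f₁ t
      + (riccatiQ η r t - riccatiQ η rb t) * f₂ t = 0 ∧
    2 * deriv f₂ t + 4 * f₁ t * f₂ t - 2 * f₃ t
      + (riccatiQ η r t + riccatiQ η rb t) * f₂ t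
      + (riccatiQ η r t - riccatiQ η rb t) * f₁ t = 0 ∧
    2 * deriv f₃ t + 2 * f₁ t * f₃ t + f₂ t * (f₁ t ^ 2 - f₂ t ^ 2)
      + 2 * (riccatiQ η r t + riccatiQ η rb t) * f₃ t = 0

lemma aux_factor {g : ℂ → ℂ} (hg : AnalyticAt ℂ g 0) (h0 : g 0 = 0) :
    ∃ h : ℂ → ℂ, AnalyticAt ℂ h 0 ∧ ∀ t, g t = t * h t := by
  obtain ⟨p, hp⟩ := hg
  refine ⟨dslope g 0, ⟨_, hp.has_fpower_series_dslope_fslope⟩, fun t => ?_⟩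
  have := sub_smul_dslope g 0 t
  simp only [sub_zero, smul_eq_mul, h0] at this
  exact this.symm

lemma aux_deriv {f g : ℂ → ℂ} (N : ℕ) (hg : AnalyticAt ℂ g 0)
    (h : ∀ᶠ t in 𝓝[≠] (0 : ℂ), f t = g t / t ^ N) :
    ∀ᶠ t in 𝓝[≠] (0 : ℂ), deriv f t = deriv g t / t ^ N - N * g t / t ^ (N + 1) := by
  have h' := eventually_eventually_nhdsWithin.mpr h
  have hga : ∀ᶠ t in 𝓝[≠] (0 : ℂ), AnalyticAt ℂ g t :=
    hg.eventually_analyticAt.filter_mono nhdsWithin_le_nhds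
  filter_upwards [h', hga, self_mem_nhdsWithin] with t ht hgt ht0
  have ht0' : t ≠ 0 := ht0
  have e : f =ᶠ[𝓝 t] fun t => g t / t ^ N := by
    rwa [IsOpen.nhdsWithin_eq isOpen_compl_singleton ht0] at ht
  rw [e.deriv_eq]
  have hd := (hgt.differentiableAt.hasDerivAt).div (hasDerivAt_pow N t) (pow_ne_zero N ht0')
  have hd2 := hd.deriv
  have e2 : (fun t => g t / t ^ N) = g / (fun t => t ^ N) := rfl
  rw [e2, hd2]
  rcases N with _ | n
  · simp
  · simp only [Nat.add_sub_cancel]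
    field_simp
    ring

lemma aux_mero {f : ℂ → ℂ} (h : MeromorphicAt f 0) :
    ∃ n : ℕ, ∀ m, n ≤ m → ∃ g : ℂ → ℂ, AnalyticAt ℂ g 0 ∧
      ∀ᶠ t in 𝓝[≠] (0 : ℂ), f t = g t / t ^ m := by
  obtain ⟨n, hn⟩ := h
  refine ⟨n, fun m hm => ⟨fun t => t ^ (m - n) * (t ^ n * f t), ?_, ?_⟩⟩
  · simp only [sub_zero, smul_eq_mul] at hn
    have : AnalyticAt ℂ (fun t : ℂ => t ^ (m - n)) 0 := by fun_prop
    exact this.mul hn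
  · filter_upwards [self_mem_nhdsWithin] with t ht
    have ht0 : t ≠ 0 := ht
    rw [← mul_assoc, ← pow_add, Nat.sub_add_cancel hm]
    field_simp

/-- `f₁, f₂` have poles of order at most `N`, `f₃` of order at most `2N`. -/
def PoleBd (N : ℕ) (f₁ f₂ f₃ g₁ g₂ g₃ : ℂ → ℂ) : Prop :=
  AnalyticAt ℂ g₁ 0 ∧ AnalyticAt ℂ g₂ 0 ∧ AnalyticAt ℂ g₃ 0 ∧
  (∀ᶠ t in 𝓝[≠] (0 : ℂ), f₁ t = g₁ t / t ^ N) ∧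
  (∀ᶠ t in 𝓝[≠] (0 : ℂ), f₂ t = g₂ t / t ^ N) ∧
  (∀ᶠ t in 𝓝[≠] (0 : ℂ), f₃ t = g₃ t / t ^ (2 * N))

lemma aux_eqs (η : ℕ) (r rb f₁ f₂ f₃ g₁ g₂ g₃ : ℂ → ℂ) (M : ℕ)
    (hsys : CoupledRiccatiSystem η r rb f₁ f₂ f₃)
    (hP : PoleBd (M + 1) f₁ f₂ f₃ g₁ g₂ g₃) :
    ∀ᶠ t in 𝓝[≠] (0 : ℂ),
      2 * t ^ (M + 1) * deriv g₁ t - 2 * (M + 1) * t ^ M * g₁ t + g₁ t ^ 2 + 3 * g₂ t ^ 2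
        + (-2 * η * t ^ M + t ^ (M + 1) * (r t + rb t)) * g₁ t
        + t ^ (M + 1) * (r t - rb t) * g₂ t = 0 ∧
      2 * t ^ (M + 1) * deriv g₂ t - 2 * (M + 1) * t ^ M * g₂ t + 4 * g₁ t * g₂ t - 2 * g₃ t
        + (-2 * η * t ^ M + t ^ (M + 1) * (r t + rb t)) * g₂ t
        + t ^ (M + 1) * (r t - rb t) * g₁ t = 0 ∧
      2 * t ^ (M + 1) * deriv g₃ t - 4 * (M + 1) * t ^ M * g₃ t + 2 * g₁ t * g₃ t
        + g₂ t * (g₁ t ^ 2 - g₂ t ^ 2)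
        + 2 * (-2 * η * t ^ M + t ^ (M + 1) * (r t + rb t)) * g₃ t = 0 := by
  obtain ⟨a1, a2, a3, e1, e2, e3⟩ := hP
  filter_upwards [hsys, e1, e2, e3, aux_deriv _ a1 e1, aux_deriv _ a2 e2, aux_deriv _ a3 e3,
    self_mem_nhdsWithin] with t ht h1 h2 h3 d1 d2 d3 ht0
  have ht0 : t ≠ 0 := ht0
  obtain ⟨s1, s2, s3⟩ := ht
  rw [d1, h1, h2] at s1
  rw [d2, h1, h2, h3] at s2
  rw [d3, h1, h2, h3] at s3
  have hp : t ^ M ≠ 0 := pow_ne_zero _ ht0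
  simp only [riccatiQ, pow_succ, pow_mul', mul_add, pow_add, pow_zero, pow_one, mul_one, one_mul]
    at s1 s2 s3
  push_cast at s1 s2 s3
  simp only [pow_succ]
  generalize t ^ M = u at *
  refine ⟨?_, ?_, ?_⟩
  · have := congrArg (fun z => (u * t) ^ 2 * z) s1
    simp only [mul_zero] at this
    rw [← this]
    field_simp
    ring
  · have := congrArg (fun z => (u * t) ^ 2 * z) s2
    simp only [mul_zero] at this
    rw [← this]
    field_simp
    ring
  · have := congrArg (fun z => (u * t) ^ 3 * z) s3
    simp only [mul_zero] at this
    rw [← this]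
    field_simp
    ring

lemma aux_eqs0 (η : ℕ) (r rb f₁ f₂ f₃ g₁ g₂ g₃ : ℂ → ℂ) (M : ℕ)
    (hr : AnalyticAt ℂ r 0) (hrb : AnalyticAt ℂ rb 0)
    (hsys : CoupledRiccatiSystem η r rb f₁ f₂ f₃)
    (hP : PoleBd (M + 1) f₁ f₂ f₃ g₁ g₂ g₃) :
      - 2 * (M + 1) * 0 ^ M * g₁ 0 + g₁ 0 ^ 2 + 3 * g₂ 0 ^ 2
        + (-2 * η * 0 ^ M) * g₁ 0 = 0 ∧
      - 2 * (M + 1) * 0 ^ M * g₂ 0 + 4 * g₁ 0 * g₂ 0 - 2 * g₃ 0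
        + (-2 * η * 0 ^ M) * g₂ 0 = 0 ∧
      - 4 * (M + 1) * 0 ^ M * g₃ 0 + 2 * g₁ 0 * g₃ 0
        + g₂ 0 * (g₁ 0 ^ 2 - g₂ 0 ^ 2)
        + 2 * (-2 * η * 0 ^ M) * g₃ 0 = 0 := by
  have key := aux_eqs η r rb f₁ f₂ f₃ g₁ g₂ g₃ M hsys hP
  obtain ⟨a1, a2, a3, -, -, -⟩ := hP
  have c1 := a1.continuousAt
  have c2 := a2.continuousAt
  have c3 := a3.continuousAt
  have b1 := a1.deriv.continuousAt
  have b2 := a2.deriv.continuousAt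
  have b3 := a3.deriv.continuousAt
  have k1 := hr.continuousAt
  have k2 := hrb.continuousAt
  have z1 := aux_zero (by fun_prop) (key.mono fun t h => h.1)
  have z2 := aux_zero (by fun_prop) (key.mono fun t h => h.2.1)
  have z3 := aux_zero (by fun_prop) (key.mono fun t h => h.2.2)
  simp only [pow_succ, mul_zero, zero_mul] at z1 z2 z3
  refine ⟨?_, ?_, ?_⟩
  · linear_combination z1
  · linear_combination z2
  · linear_combination z3

lemma aux_descent (η : ℕ) (r rb f₁ f₂ f₃ g₁ g₂ g₃ : ℂ → ℂ) (M : ℕ)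
    (hr : AnalyticAt ℂ r 0) (hrb : AnalyticAt ℂ rb 0)
    (hsys : CoupledRiccatiSystem η r rb f₁ f₂ f₃)
    (hP : PoleBd (M + 1 + 1) f₁ f₂ f₃ g₁ g₂ g₃) :
    ∃ h₁ h₂ h₃, PoleBd (M + 1) f₁ f₂ f₃ h₁ h₂ h₃ := by
  obtain ⟨z1, z2, z3⟩ := aux_eqs0 η r rb f₁ f₂ f₃ g₁ g₂ g₃ (M + 1) hr hrb hsys hP
  have key := aux_eqs η r rb f₁ f₂ f₃ g₁ g₂ g₃ (M + 1) hsys hP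
  obtain ⟨a1, a2, a3, e1, e2, e3⟩ := hP
  simp only [pow_succ, mul_zero, zero_mul, zero_add, add_zero, pow_zero, one_mul] at z1 z2 z3
  have hb : g₂ 0 = 0 := by
    have : g₂ 0 ^ 3 = 0 := by
      linear_combination (-1 / 16 : ℂ) * z3 + (5 / 16 : ℂ) * g₂ 0 * z1 - (1 / 16 : ℂ) * g₁ 0 * z2
    exact pow_eq_zero_iff (by norm_num) |>.mp this
  have ha : g₁ 0 = 0 := by
    have : g₁ 0 ^ 2 = 0 := by rw [hb] at z1; linear_combination z1
    exact pow_eq_zero_iff (by norm_num) |>.mp this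
  have hc : g₃ 0 = 0 := by
    rw [hb] at z2; linear_combination (-1 / 2 : ℂ) * z2
  obtain ⟨h1, A1, E1⟩ := aux_factor a1 ha
  obtain ⟨h2, A2, E2⟩ := aux_factor a2 hb
  obtain ⟨h3, A3, E3⟩ := aux_factor a3 hc
  have hh : h3 0 = 0 := by
    have c1 := a1.continuousAt
    have C1 := A1.continuousAt
    have C2 := A2.continuousAt
    have C3 := A3.continuousAt
    have b2 := a2.deriv.continuousAt
    have k1 := hr.continuousAt
    have k2 := hrb.continuousAt
    have : ∀ᶠ t in 𝓝[≠] (0 : ℂ),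
        2 * t ^ (M + 1) * deriv g₂ t - 2 * ((M + 1 : ℕ) + 1) * t ^ (M + 1) * h2 t
          + 4 * g₁ t * h2 t - 2 * h3 t
          + (-2 * η * t ^ (M + 1) + t ^ (M + 1 + 1) * (r t + rb t)) * h2 t
          + t ^ (M + 1 + 1) * (r t - rb t) * h1 t = 0 := by
      filter_upwards [key, self_mem_nhdsWithin] with t ht ht0
      have ht0 : t ≠ 0 := ht0
      have := ht.2.1
      apply mul_left_cancel₀ ht0
      rw [E2 t, E3 t] at this
      rw [mul_zero, ← this]
      have := E1 t
      linear_combination (-(t ^ (M + 1 + 1) * (r t - rb t))) * this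
    have z := aux_zero (by fun_prop) this
    simp only [pow_succ, mul_zero, zero_mul, ha] at z
    linear_combination (-1 / 2 : ℂ) * z
  obtain ⟨k3, B3, F3⟩ := aux_factor A3 hh
  refine ⟨h1, h2, k3, A1, A2, B3, ?_, ?_, ?_⟩
  · filter_upwards [e1, self_mem_nhdsWithin] with t ht ht0
    have ht0 : t ≠ 0 := ht0
    rw [ht, E1 t, pow_succ t (M + 1)]
    field_simp
  · filter_upwards [e2, self_mem_nhdsWithin] with t ht ht0
    have ht0 : t ≠ 0 := ht0
    rw [ht, E2 t, pow_succ t (M + 1)]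
    field_simp
  · filter_upwards [e3, self_mem_nhdsWithin] with t ht ht0
    have ht0 : t ≠ 0 := ht0
    rw [ht, E3 t, F3 t, mul_add 2 (M + 1) 1, pow_add t (2 * (M + 1))]
    field_simp
    ring

lemma aux_all (η : ℕ) (r rb f₁ f₂ f₃ : ℂ → ℂ)
    (hr : AnalyticAt ℂ r 0) (hrb : AnalyticAt ℂ rb 0)
    (hsys : CoupledRiccatiSystem η r rb f₁ f₂ f₃) (M : ℕ) :
    ∀ g₁ g₂ g₃, PoleBd (M + 1) f₁ f₂ f₃ g₁ g₂ g₃ →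
    ∃ h₁ h₂ h₃, PoleBd (0 + 1) f₁ f₂ f₃ h₁ h₂ h₃ := by
  induction M with
  | zero => exact fun g₁ g₂ g₃ h => ⟨g₁, g₂, g₃, h⟩
  | succ n ih =>
    intro g₁ g₂ g₃ h
    obtain ⟨h1, h2, h3, hh⟩ := aux_descent η r rb f₁ f₂ f₃ g₁ g₂ g₃ n hr hrb hsys h
    exact ih h1 h2 h3 hh

/-- classification of the leading behaviour at the origin of
meromorphic solutions of the coupled Riccati system. -/
theorem stmt_8 (η : ℕ) (r rb f₁ f₂ f₃ : ℂ → ℂ)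
    (hr : AnalyticAt ℂ r 0) (hrb : AnalyticAt ℂ rb 0)
    (h₁ : MeromorphicAt f₁ 0) (h₂ : MeromorphicAt f₂ 0) (h₃ : MeromorphicAt f₃ 0)
    (hsys : CoupledRiccatiSystem η r rb f₁ f₂ f₃) :
    ∃ a b c : ℂ,
      Tendsto (fun t => t * f₁ t) (𝓝[≠] (0 : ℂ)) (𝓝 a) ∧
      Tendsto (fun t => t * f₂ t) (𝓝[≠] (0 : ℂ)) (𝓝 b) ∧
      Tendsto (fun t => t ^ 2 * f₃ t) (𝓝[≠] (0 : ℂ)) (𝓝 c) ∧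
      ((a = 0 ∧ b = 0 ∧ c = 0) ∨
       (a = 2 * ((η : ℂ) + 1) ∧ b = 0 ∧ c = 0) ∨
       (a = ((η : ℂ) + 1) / 2 ∧ b = ((η : ℂ) + 1) / 2 ∧ c = 0) ∨
       (a = ((η : ℂ) + 1) / 2 ∧ b = -(((η : ℂ) + 1) / 2) ∧ c = 0) ∨
       (a = 3 * ((η : ℂ) + 1) / 2 ∧ b = ((η : ℂ) + 1) / 2 ∧ c = ((η : ℂ) + 1) ^ 2) ∨
       (a = 3 * ((η : ℂ) + 1) / 2 ∧ b = -(((η : ℂ) + 1) / 2) ∧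
         c = -(((η : ℂ) + 1) ^ 2))) := by

  obtain ⟨n1, H1⟩ := aux_mero h₁
  obtain ⟨n2, H2⟩ := aux_mero h₂
  obtain ⟨n3, H3⟩ := aux_mero h₃
  obtain ⟨G1, A1, E1⟩ := H1 (n1 + n2 + n3 + 1) (by omega)
  obtain ⟨G2, A2, E2⟩ := H2 (n1 + n2 + n3 + 1) (by omega)
  obtain ⟨G3, A3, E3⟩ := H3 (2 * (n1 + n2 + n3 + 1)) (by omega)
  obtain ⟨g1, g2, g3, hP⟩ := aux_all η r rb f₁ f₂ f₃ hr hrb hsys (n1 + n2 + n3) G1 G2 G3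
    ⟨A1, A2, A3, E1, E2, E3⟩
  obtain ⟨z1, z2, z3⟩ := aux_eqs0 η r rb f₁ f₂ f₃ g1 g2 g3 0 hr hrb hsys hP
  obtain ⟨a1, a2, a3, e1, e2, e3⟩ := hP
  refine ⟨g1 0, g2 0, g3 0, ?_, ?_, ?_, ?_⟩
  · refine (a1.continuousAt.tendsto.mono_left nhdsWithin_le_nhds).congr' ?_
    filter_upwards [e1, self_mem_nhdsWithin] with t ht ht0
    have ht0 : t ≠ 0 := ht0
    rw [ht]; field_simp; try simp
  · refine (a2.continuousAt.tendsto.mono_left nhdsWithin_le_nhds).congr' ?_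
    filter_upwards [e2, self_mem_nhdsWithin] with t ht ht0
    have ht0 : t ≠ 0 := ht0
    rw [ht]; field_simp; try simp
  · refine (a3.continuousAt.tendsto.mono_left nhdsWithin_le_nhds).congr' ?_
    filter_upwards [e3, self_mem_nhdsWithin] with t ht ht0
    have ht0 : t ≠ 0 := ht0
    rw [ht]; field_simp; try simp
  · generalize g1 0 = a at *
    generalize g2 0 = b at *
    generalize g3 0 = c at *
    simp only [pow_zero, mul_one, Nat.cast_zero, zero_add] at z1 z2 z3
    generalize hμ : (η : ℂ) + 1 = μ
    have hη : (η : ℂ) = μ - 1 := by rw [← hμ]; ring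
    rw [hη] at z1 z2 z3
    have hc : c = 2 * a * b - μ * b := by linear_combination (-1 / 2 : ℂ) * z2
    by_cases hb : b = 0
    · subst hb
      have : a * (a - 2 * μ) = 0 := by linear_combination z1
      rcases mul_eq_zero.mp this with h | h
      · left; exact ⟨h, rfl, by rw [hc]; ring⟩
      · right; left; exact ⟨by linear_combination h, rfl, by rw [hc]; ring⟩
    · have q : b * (5 * a ^ 2 - 10 * a * μ + 4 * μ ^ 2 - b ^ 2) = 0 := by
        rw [hc] at z3; linear_combination z3
      have q' := (mul_eq_zero.mp q).resolve_left hb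
      have p : (a - μ / 2) * (a - 3 * μ / 2) = 0 := by
        linear_combination (3 / 16 : ℂ) * q' + (1 / 16 : ℂ) * z1
      have hbb : (b - μ / 2) * (b + μ / 2) = 0 := by
        linear_combination (5 / 16 : ℂ) * z1 - (1 / 16 : ℂ) * q'
      rcases mul_eq_zero.mp p with h | h <;> rcases mul_eq_zero.mp hbb with h' | h'
      · have ea : a = μ / 2 := by linear_combination h
        have eb : b = μ / 2 := by linear_combination h'
        right; right; left; exact ⟨ea, eb, by rw [hc, ea]; ring⟩
      · have ea : a = μ / 2 := by linear_combination h
        have eb : b = -(μ / 2) := by linear_combination h'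
        right; right; right; left; exact ⟨ea, eb, by rw [hc, ea]; ring⟩
      · have ea : a = 3 * μ / 2 := by linear_combination h
        have eb : b = μ / 2 := by linear_combination h'
        right; right; right; right; left; exact ⟨ea, eb, by rw [hc, ea, eb]; ring⟩
      · have ea : a = 3 * μ / 2 := by linear_combination h
        have eb : b = -(μ / 2) := by linear_combination h'
        right; right; right; right; right; exact ⟨ea, eb, by rw [hc, ea, eb]; ring⟩
end

section
/- Let f₁, f₂, f₃ be functions meromorphic at 0 satisfying the coupled Riccati system on a punctured neighbourhood of 0, and suppose f₁, f₂ and f₃ are all analytic at 0. Then there exist functions h₁, h₂, h₃ analytic at 0 such that, for all t in a neighbourhood of 0, f₁(t) = t^η h₁(t), f₂(t) = t^η h₂(t) and f₃(t) = t^{2η} h₃(t). -/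
open Filter Topology

/-- `f` is divisible by `t ^ k` among germs analytic at `0`. -/
def VanOrd (k : ℕ) (f : ℂ → ℂ) : Prop :=
  ∃ g : ℂ → ℂ, AnalyticAt ℂ g 0 ∧ ∀ᶠ t in 𝓝 (0 : ℂ), f t = t ^ k * g t

theorem VanOrd.add {k : ℕ} {f g : ℂ → ℂ} (hf : VanOrd k f) (hg : VanOrd k g) :
    VanOrd k (fun t => f t + g t) := by
  obtain ⟨a, ha, ea⟩ := hf
  obtain ⟨b, hb, eb⟩ := hg
  refine ⟨fun t => a t + b t, ha.add hb, ?_⟩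
  filter_upwards [ea, eb] with t h1 h2
  rw [h1, h2]; ring

theorem VanOrd.mul {k : ℕ} {f g : ℂ → ℂ} (hf : VanOrd k f) (hg : AnalyticAt ℂ g 0) :
    VanOrd k (fun t => g t * f t) := by
  obtain ⟨a, ha, ea⟩ := hf
  refine ⟨fun t => g t * a t, hg.mul ha, ?_⟩
  filter_upwards [ea] with t h1
  rw [h1]; ring

theorem VanOrd.mul' {k l : ℕ} {f g : ℂ → ℂ} (hf : VanOrd k f) (hg : VanOrd l g) :
    VanOrd (k + l) (fun t => f t * g t) := by
  obtain ⟨a, ha, ea⟩ := hf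
  obtain ⟨b, hb, eb⟩ := hg
  refine ⟨fun t => a t * b t, ha.mul hb, ?_⟩
  filter_upwards [ea, eb] with t h1 h2
  rw [h1, h2]; ring

theorem VanOrd.mono {k l : ℕ} {f : ℂ → ℂ} (hf : VanOrd k f) (h : l ≤ k) : VanOrd l f := by
  obtain ⟨a, ha, ea⟩ := hf
  obtain ⟨d, rfl⟩ := Nat.exists_eq_add_of_le h
  refine ⟨fun t => t ^ d * a t, (analyticAt_id.pow d).mul ha, ?_⟩
  filter_upwards [ea] with t h1
  rw [h1]; ring

theorem VanOrd.step {k m : ℕ} {f u : ℂ → ℂ} (hfa : AnalyticAt ℂ f 0) (hf : VanOrd k f)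
    (hu : VanOrd k u) (hk : k < m)
    (he : ∀ᶠ t in 𝓝[≠] (0 : ℂ), deriv f t = (m : ℂ) / t * f t + u t) :
    VanOrd (k + 1) f := by
  obtain ⟨g, hg, eg⟩ := hf
  obtain ⟨v, hv, ev⟩ := hu
  have hc : ((k : ℂ) - m) ≠ 0 := by
    rw [sub_ne_zero]
    exact_mod_cast hk.ne
  have hw : AnalyticAt ℂ (fun t => (v t - deriv g t) / ((k : ℂ) - m)) 0 :=
    (hv.sub hg.deriv).div_const
  refine ⟨_, hw, ?_⟩
  have hP : AnalyticAt ℂ (fun t => t ^ (k + 1) * ((v t - deriv g t) / ((k : ℂ) - m))) 0 :=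
    (analyticAt_id.pow (k + 1)).mul hw
  refine (ContinuousAt.eventuallyEq_nhds_iff_eventuallyEq_nhdsNE
    hfa.continuousAt hP.continuousAt).1 ?_
  have hd : ∀ᶠ t in 𝓝 (0 : ℂ),
      deriv f t = (k : ℂ) * t ^ (k - 1) * g t + t ^ k * deriv g t := by
    filter_upwards [eg.eventually_nhds, hg.eventually_analyticAt] with t h1 h2
    rw [Filter.EventuallyEq.deriv_eq h1]
    exact ((hasDerivAt_pow k t).mul h2.differentiableAt.hasDerivAt).deriv
  filter_upwards [he, eg.filter_mono nhdsWithin_le_nhds, ev.filter_mono nhdsWithin_le_nhds,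
    hd.filter_mono nhdsWithin_le_nhds, self_mem_nhdsWithin] with t h1 h2 h3 h4 h5
  have h5 : t ≠ 0 := h5
  have hkt : (k : ℂ) * t ^ (k - 1) * t = k * t ^ k := by
    rcases k with _ | k
    · simp
    · simp [pow_succ]; ring
  rw [h4, h3, h2] at h1
  have h6 : t ^ k * (((k : ℂ) - m) * g t) = t ^ k * (t * (v t - deriv g t)) := by
    have h7 : (m : ℂ) / t * t = m := div_mul_cancel₀ _ h5
    linear_combination t * h1 - g t * hkt + t ^ k * g t * h7
  have h8 := mul_left_cancel₀ (pow_ne_zero k h5) h6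
  rw [h2]
  field_simp
  linear_combination t ^ k * h8

/-- analytic solutions of the coupled Riccati system vanish to
order η (resp. 2η for the third component) at the origin. -/
theorem stmt_9 (η : ℕ) (r rb f₁ f₂ f₃ : ℂ → ℂ)
    (hr : AnalyticAt ℂ r 0) (hrb : AnalyticAt ℂ rb 0)
    (h₁ : AnalyticAt ℂ f₁ 0) (h₂ : AnalyticAt ℂ f₂ 0) (h₃ : AnalyticAt ℂ f₃ 0)
    (hsys : CoupledRiccatiSystem η r rb f₁ f₂ f₃) :
    ∃ h₁' h₂' h₃' : ℂ → ℂ,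
      AnalyticAt ℂ h₁' 0 ∧ AnalyticAt ℂ h₂' 0 ∧ AnalyticAt ℂ h₃' 0 ∧
      ∀ᶠ t in 𝓝 (0 : ℂ),
        f₁ t = t ^ η * h₁' t ∧ f₂ t = t ^ η * h₂' t ∧
          f₃ t = t ^ (2 * η) * h₃' t := by
  have E1 : ∀ᶠ t in 𝓝[≠] (0 : ℂ), deriv f₁ t = (η : ℂ) / t * f₁ t +
      ((-(f₁ t + r t + rb t) / 2) * f₁ t + (-(3 * f₂ t + r t - rb t) / 2) * f₂ t) := by
    filter_upwards [hsys] with t ht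
    obtain ⟨a, -, -⟩ := ht
    simp only [riccatiQ] at a
    linear_combination a / 2
  have E2 : ∀ᶠ t in 𝓝[≠] (0 : ℂ), deriv f₂ t = (η : ℂ) / t * f₂ t +
      ((-(4 * f₁ t + r t + rb t) / 2) * f₂ t + ((-(r t - rb t) / 2) * f₁ t + 1 * f₃ t)) := by
    filter_upwards [hsys] with t ht
    obtain ⟨-, a, -⟩ := ht
    simp only [riccatiQ] at a
    linear_combination a / 2
  have E3 : ∀ᶠ t in 𝓝[≠] (0 : ℂ), deriv f₃ t = ((2 * η : ℕ) : ℂ) / t * f₃ t +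
      ((-(f₁ t + r t + rb t)) * f₃ t +
        ((-f₁ t / 2) * (f₁ t * f₂ t) + (f₂ t / 2) * (f₂ t * f₂ t))) := by
    filter_upwards [hsys] with t ht
    obtain ⟨-, -, a⟩ := ht
    simp only [riccatiQ] at a
    push_cast
    linear_combination a / 2
  have zero : ∀ f : ℂ → ℂ, AnalyticAt ℂ f 0 → VanOrd 0 f := fun f hf =>
    ⟨f, hf, Eventually.of_forall fun t => by simp⟩
  have A1 : ∀ k, k ≤ η → VanOrd k f₁ ∧ VanOrd k f₂ ∧ VanOrd k f₃ := by
    intro k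
    induction k with
    | zero => exact fun _ => ⟨zero _ h₁, zero _ h₂, zero _ h₃⟩
    | succ k ih =>
      intro hk
      obtain ⟨o1, o2, o3⟩ := ih (by omega)
      refine ⟨VanOrd.step h₁ o1 ?_ (by omega) E1, VanOrd.step h₂ o2 ?_ (by omega) E2,
        VanOrd.step h₃ o3 ?_ (by omega) E3⟩
      · exact (o1.mul (by fun_prop)).add (o2.mul (by fun_prop))
      · exact (o2.mul (by fun_prop)).add ((o1.mul (by fun_prop)).add (o3.mul (by fun_prop)))
      · exact (o3.mul (by fun_prop)).add
          (((o2.mul h₁).mul (by fun_prop)).add ((o2.mul h₂).mul (by fun_prop)))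
  obtain ⟨o1, o2, -⟩ := A1 η le_rfl
  have A3 : ∀ k, k ≤ 2 * η → VanOrd k f₃ := by
    intro k
    induction k with
    | zero => exact fun _ => zero _ h₃
    | succ k ih =>
      intro hk
      have o3 := ih (by omega)
      refine VanOrd.step h₃ o3 ?_ (by omega) E3
      exact (o3.mul (by fun_prop)).add
          ((((o1.mul' o2).mono (by omega)).mul (by fun_prop)).add
            (((o2.mul' o2).mono (by omega)).mul (by fun_prop)))
  obtain ⟨g1, a1, e1⟩ := o1
  obtain ⟨g2, a2, e2⟩ := o2
  obtain ⟨g3, a3, e3⟩ := A3 _ le_rfl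
  refine ⟨g1, g2, g3, a1, a2, a3, ?_⟩
  filter_upwards [e1, e2, e3] with t b1 b2 b3
  exact ⟨b1, b2, b3⟩
end

section
/- Let (f₁, f₂, f₃) and (g₁, g₂, g₃) be two triples of functions meromorphic at 0, each satisfying the coupled Riccati system on a punctured neighbourhood of 0, and suppose that the functions t ↦ f₁(t) − 2(η+1)/t and t ↦ g₁(t) − 2(η+1)/t are analytic at 0, that f₂ and g₂ are analytic at 0, and that f₃ and g₃ have at most simple poles at 0. Then fᵢ(t) = gᵢ(t) for i = 1, 2, 3 and for all t in some punctured neighbourhood of 0; i.e. the singular solution with leading behaviour (a,b,c) = (2(η+1), 0, 0) is unique. -/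
open Filter Topology

/-- An analytic function vanishing at 0 is divisible by `t`. -/
lemma analytic_factor {u : ℂ → ℂ} (hu : AnalyticAt ℂ u 0) (h0 : u 0 = 0) :
    ∃ v, AnalyticAt ℂ v 0 ∧ ∀ᶠ t in 𝓝 (0:ℂ), u t = t * v t := by
  have h1 : ((1:ℕ) : ℕ∞) ≤ analyticOrderAt u 0 := by
    rw [Nat.cast_one, Order.one_le_iff_ne_zero]
    exact hu.analyticOrderAt_ne_zero.mpr h0
  obtain ⟨g, hg, h⟩ := (natCast_le_analyticOrderAt hu).mp h1
  exact ⟨g, hg, by simpa using h⟩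

/-- A function which is divisible by all powers of `t` vanishes near 0. -/
lemma eventually_zero_of_all_pow {u : ℂ → ℂ} (hu : AnalyticAt ℂ u 0)
    (h : ∀ n : ℕ, ∃ v, AnalyticAt ℂ v 0 ∧ ∀ᶠ t in 𝓝 (0:ℂ), u t = t ^ n * v t) :
    ∀ᶠ t in 𝓝 (0:ℂ), u t = 0 := by
  rw [← analyticOrderAt_eq_top]
  refine ENat.eq_top_iff_forall_ge.mpr fun n => ?_
  obtain ⟨v, hv, e⟩ := h n
  exact (natCast_le_analyticOrderAt hu).mpr ⟨v, hv, by simpa using e⟩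

/-- Euler derivative of `t ^ n * v`. -/
lemma euler_deriv {u v : ℂ → ℂ} {n : ℕ} (hv : AnalyticAt ℂ v 0)
    (h : ∀ᶠ t in 𝓝 (0:ℂ), u t = t ^ n * v t) :
    ∀ᶠ t in 𝓝 (0:ℂ), t * deriv u t = t ^ n * (n * v t + t * deriv v t) := by
  filter_upwards [h.eventually_nhds, hv.eventually_analyticAt] with t ht hvt
  have e : deriv u t = deriv (fun z => z ^ n * v z) t := Filter.EventuallyEq.deriv_eq ht
  have hd := ((hasDerivAt_pow n t).mul hvt.differentiableAt.hasDerivAt).deriv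
  have e2 : deriv (fun z => z ^ n * v z) t = n * t ^ (n-1) * v t + t ^ n * deriv v t := hd
  rw [e, e2]
  rcases n with _ | n
  · simp
  · simp only [Nat.add_sub_cancel]; push_cast; ring

/-- A function analytic at 0 which vanishes on a punctured neighbourhood vanishes at 0. -/
lemma value_zero {u : ℂ → ℂ} (hu : AnalyticAt ℂ u 0) (h : ∀ᶠ t in 𝓝[≠] (0:ℂ), u t = 0) :
    u 0 = 0 := by
  have h1 : Tendsto u (𝓝[≠] (0:ℂ)) (𝓝 (u 0)) := hu.continuousAt.tendsto.mono_left nhdsWithin_le_nhds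
  have h2 : Tendsto u (𝓝[≠] (0:ℂ)) (𝓝 0) := tendsto_const_nhds.congr' (h.mono fun t ht => ht.symm)
  exact tendsto_nhds_unique h1 h2

/-- Uniqueness for the linear Fuchsian system satisfied by the difference. -/
lemma fuchs_unique (η : ℕ) {u v w a₁ a₂ b₁ b₂ c₁ c₂ c₃ : ℂ → ℂ}
    (hu : AnalyticAt ℂ u 0) (hv : AnalyticAt ℂ v 0) (hw : AnalyticAt ℂ w 0)
    (ha₁ : AnalyticAt ℂ a₁ 0) (ha₂ : AnalyticAt ℂ a₂ 0)
    (hb₁ : AnalyticAt ℂ b₁ 0) (hb₂ : AnalyticAt ℂ b₂ 0)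
    (hc₁ : AnalyticAt ℂ c₁ 0) (hc₂ : AnalyticAt ℂ c₂ 0) (hc₃ : AnalyticAt ℂ c₃ 0)
    (h₁ : ∀ᶠ t in 𝓝[≠] (0:ℂ), t * deriv u t + (η + 2) * u t = t * (a₁ t * u t + a₂ t * v t))
    (h₂ : ∀ᶠ t in 𝓝[≠] (0:ℂ), t * deriv v t + (3 * η + 4) * v t - w t
      = t * (b₁ t * u t + b₂ t * v t))
    (h₃ : ∀ᶠ t in 𝓝[≠] (0:ℂ), t * deriv w t + w t + 2 * (η + 1) ^ 2 * v t
      = t * (c₁ t * u t + c₂ t * v t + c₃ t * w t)) :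
    (∀ᶠ t in 𝓝 (0:ℂ), u t = 0) ∧ (∀ᶠ t in 𝓝 (0:ℂ), v t = 0) ∧ (∀ᶠ t in 𝓝 (0:ℂ), w t = 0) := by
  have key : ∀ n : ℕ, ∃ U V W : ℂ → ℂ, AnalyticAt ℂ U 0 ∧ AnalyticAt ℂ V 0 ∧ AnalyticAt ℂ W 0 ∧
      (∀ᶠ t in 𝓝 (0:ℂ), u t = t ^ n * U t) ∧ (∀ᶠ t in 𝓝 (0:ℂ), v t = t ^ n * V t) ∧
      (∀ᶠ t in 𝓝 (0:ℂ), w t = t ^ n * W t) := by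
    intro n
    induction n with
    | zero => exact ⟨u, v, w, hu, hv, hw, by simp, by simp, by simp⟩
    | succ n ih =>
      obtain ⟨U, V, W, hU, hV, hW, eU, eV, eW⟩ := ih
      have dU := hU.deriv
      have dV := hV.deriv
      have dW := hW.deriv
      have z₁ := value_zero (u := fun t => n * U t + t * deriv U t + (η + 2) * U t
          - t * (a₁ t * U t + a₂ t * V t)) (by fun_prop) (by
        filter_upwards [h₁, (euler_deriv hU eU).filter_mono nhdsWithin_le_nhds,
          eU.filter_mono nhdsWithin_le_nhds, eV.filter_mono nhdsWithin_le_nhds,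
          self_mem_nhdsWithin] with t h d xU xV ht
        have ht' : t ^ n ≠ 0 := pow_ne_zero _ ht
        rw [d, xU, xV] at h
        apply mul_left_cancel₀ ht'
        linear_combination h)
      have z₂ := value_zero (u := fun t => n * V t + t * deriv V t + (3 * η + 4) * V t - W t
          - t * (b₁ t * U t + b₂ t * V t)) (by fun_prop) (by
        filter_upwards [h₂, (euler_deriv hV eV).filter_mono nhdsWithin_le_nhds,
          eU.filter_mono nhdsWithin_le_nhds, eV.filter_mono nhdsWithin_le_nhds,
          eW.filter_mono nhdsWithin_le_nhds,
          self_mem_nhdsWithin] with t h d xU xV xW ht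
        have ht' : t ^ n ≠ 0 := pow_ne_zero _ ht
        rw [d, xU, xV, xW] at h
        apply mul_left_cancel₀ ht'
        linear_combination h)
      have z₃ := value_zero (u := fun t => n * W t + t * deriv W t + W t + 2 * (η + 1) ^ 2 * V t
          - t * (c₁ t * U t + c₂ t * V t + c₃ t * W t)) (by fun_prop) (by
        filter_upwards [h₃, (euler_deriv hW eW).filter_mono nhdsWithin_le_nhds,
          eU.filter_mono nhdsWithin_le_nhds, eV.filter_mono nhdsWithin_le_nhds,
          eW.filter_mono nhdsWithin_le_nhds,
          self_mem_nhdsWithin] with t h d xU xV xW ht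
        have ht' : t ^ n ≠ 0 := pow_ne_zero _ ht
        rw [d, xU, xV, xW] at h
        apply mul_left_cancel₀ ht'
        linear_combination h)
      simp only [zero_mul, add_zero, sub_zero] at z₁ z₂ z₃
      have U0 : U 0 = 0 := by
        have : ((n + η + 2 : ℕ) : ℂ) * U 0 = 0 := by push_cast; linear_combination z₁
        exact (mul_eq_zero.mp this).resolve_left (Nat.cast_ne_zero.mpr (by omega))
      have V0 : V 0 = 0 := by
        have : (((n + 3 * η + 4) * (n + 1) + 2 * (η + 1) ^ 2 : ℕ) : ℂ) * V 0 = 0 := by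
          push_cast; linear_combination (n + 1) * z₂ + z₃
        exact (mul_eq_zero.mp this).resolve_left (Nat.cast_ne_zero.mpr (by positivity))
      have W0 : W 0 = 0 := by
        rw [V0] at z₂; linear_combination -z₂
      obtain ⟨U', hU', eU'⟩ := analytic_factor hU U0
      obtain ⟨V', hV', eV'⟩ := analytic_factor hV V0
      obtain ⟨W', hW', eW'⟩ := analytic_factor hW W0
      refine ⟨U', V', W', hU', hV', hW', ?_, ?_, ?_⟩
      · filter_upwards [eU, eU'] with t h1 h2
        rw [h1, h2]; ring
      · filter_upwards [eV, eV'] with t h1 h2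
        rw [h1, h2]; ring
      · filter_upwards [eW, eW'] with t h1 h2
        rw [h1, h2]; ring
  refine ⟨eventually_zero_of_all_pow hu fun n => ?_, eventually_zero_of_all_pow hv fun n => ?_,
    eventually_zero_of_all_pow hw fun n => ?_⟩
  all_goals obtain ⟨U, V, W, hU, hV, hW, eU, eV, eW⟩ := key n
  · exact ⟨U, hU, eU⟩
  · exact ⟨V, hV, eV⟩
  · exact ⟨W, hW, eW⟩

/-- A function with an at most simple pole is `M t / t` with `M` analytic. -/
lemma simple_pole {f : ℂ → ℂ} (hf : MeromorphicAt f 0)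
    (h : ∃ c : ℂ, Tendsto (fun t => t * f t) (𝓝[≠] (0 : ℂ)) (𝓝 c)) :
    ∃ M, AnalyticAt ℂ M 0 ∧ ∀ᶠ t in 𝓝[≠] (0:ℂ), f t = M t / t := by
  have hm : MeromorphicAt (fun t => t * f t) 0 := (MeromorphicAt.id 0).mul hf
  have ho := (tendsto_nhds_iff_meromorphicOrderAt_nonneg hm).mp h
  refine ⟨toMeromorphicNFAt (fun t => t * f t) 0, ?_, ?_⟩
  · rw [← (meromorphicNFAt_toMeromorphicNFAt).meromorphicOrderAt_nonneg_iff_analyticAt,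
      meromorphicOrderAt_congr hm.eq_nhdsNE_toMeromorphicNFAt.symm]
    exact ho
  · filter_upwards [hm.eq_nhdsNE_toMeromorphicNFAt, self_mem_nhdsWithin] with t h ht
    have ht' : t ≠ 0 := ht
    rw [← h]; field_simp

lemma deriv_pole {f k : ℂ → ℂ} {c : ℂ} (hk : AnalyticAt ℂ k 0)
    (h : ∀ᶠ t in 𝓝[≠] (0:ℂ), f t = c / t + k t) :
    ∀ᶠ t in 𝓝[≠] (0:ℂ), deriv f t = - c / t ^ 2 + deriv k t := by
  filter_upwards [Filter.EventuallyEq.nhdsNE_deriv h,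
    hk.eventually_analyticAt.filter_mono nhdsWithin_le_nhds, self_mem_nhdsWithin] with t h hkt ht
  have ht' : t ≠ 0 := ht
  rw [h]
  have := ((((hasDerivAt_const t c).div (hasDerivAt_id t) ht').add
    hkt.differentiableAt.hasDerivAt)).deriv
  refine Eq.trans this ?_
  simp

lemma deriv_simple {f M : ℂ → ℂ} (hM : AnalyticAt ℂ M 0)
    (h : ∀ᶠ t in 𝓝[≠] (0:ℂ), f t = M t / t) :
    ∀ᶠ t in 𝓝[≠] (0:ℂ), deriv f t = (deriv M t * t - M t) / t ^ 2 := by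
  filter_upwards [Filter.EventuallyEq.nhdsNE_deriv h,
    hM.eventually_analyticAt.filter_mono nhdsWithin_le_nhds, self_mem_nhdsWithin] with t h hkt ht
  have ht' : t ≠ 0 := ht
  rw [h]
  have := (hkt.differentiableAt.hasDerivAt.div (hasDerivAt_id t) ht').deriv
  refine Eq.trans this ?_
  simp

lemma deriv_sub_ev {k h : ℂ → ℂ} (hk : AnalyticAt ℂ k 0) (hh : AnalyticAt ℂ h 0) :
    ∀ᶠ t in 𝓝[≠] (0:ℂ), deriv (fun t => k t - h t) t = deriv k t - deriv h t := by
  filter_upwards [hk.eventually_analyticAt.filter_mono nhdsWithin_le_nhds,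
    hh.eventually_analyticAt.filter_mono nhdsWithin_le_nhds] with t h1 h2
  exact deriv_fun_sub h1.differentiableAt h2.differentiableAt

/-- uniqueness of the singular solution of the coupled Riccati
system with leading behaviour (a,b,c) = (2(η+1), 0, 0) at the origin. -/
theorem stmt_10 (η : ℕ) (r rb f₁ f₂ f₃ g₁ g₂ g₃ : ℂ → ℂ)
    (hr : AnalyticAt ℂ r 0) (hrb : AnalyticAt ℂ rb 0)
    (hf₁ : MeromorphicAt f₁ 0) (hf₂ : MeromorphicAt f₂ 0)
    (hf₃ : MeromorphicAt f₃ 0)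
    (hg₁ : MeromorphicAt g₁ 0) (hg₂ : MeromorphicAt g₂ 0)
    (hg₃ : MeromorphicAt g₃ 0)
    (hsysf : CoupledRiccatiSystem η r rb f₁ f₂ f₃)
    (hsysg : CoupledRiccatiSystem η r rb g₁ g₂ g₃)
    (hf₁' : ∃ k : ℂ → ℂ, AnalyticAt ℂ k 0 ∧
      ∀ᶠ t in 𝓝[≠] (0 : ℂ), f₁ t = 2 * ((η : ℂ) + 1) / t + k t)
    (hg₁' : ∃ k : ℂ → ℂ, AnalyticAt ℂ k 0 ∧
      ∀ᶠ t in 𝓝[≠] (0 : ℂ), g₁ t = 2 * ((η : ℂ) + 1) / t + k t)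
    (hf₂' : ∃ k : ℂ → ℂ, AnalyticAt ℂ k 0 ∧ ∀ᶠ t in 𝓝[≠] (0 : ℂ), f₂ t = k t)
    (hg₂' : ∃ k : ℂ → ℂ, AnalyticAt ℂ k 0 ∧ ∀ᶠ t in 𝓝[≠] (0 : ℂ), g₂ t = k t)
    (hf₃' : ∃ c₃ : ℂ, Tendsto (fun t => t * f₃ t) (𝓝[≠] (0 : ℂ)) (𝓝 c₃))
    (hg₃' : ∃ c₃ : ℂ, Tendsto (fun t => t * g₃ t) (𝓝[≠] (0 : ℂ)) (𝓝 c₃)) :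
    ∀ᶠ t in 𝓝[≠] (0 : ℂ), f₁ t = g₁ t ∧ f₂ t = g₂ t ∧ f₃ t = g₃ t := by
  obtain ⟨k, hk, ek⟩ := hf₁'
  obtain ⟨h, hh, eh⟩ := hg₁'
  obtain ⟨l, hl, el⟩ := hf₂'
  obtain ⟨p, hp, ep⟩ := hg₂'
  obtain ⟨M, hM, eM⟩ := simple_pole hf₃ hf₃'
  obtain ⟨P, hP, eP⟩ := simple_pole hg₃ hg₃'
  have dk := deriv_pole hk ek
  have dh := deriv_pole hh eh
  have dl := Filter.EventuallyEq.nhdsNE_deriv el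
  have dp := Filter.EventuallyEq.nhdsNE_deriv ep
  have dM := deriv_simple hM eM
  have dP := deriv_simple hP eP
  unfold CoupledRiccatiSystem riccatiQ at hsysf hsysg
  obtain ⟨r1, r2, r3⟩ := fuchs_unique η (u := fun t => k t - h t) (v := fun t => l t - p t)
    (w := fun t => M t - P t)
    (a₁ := fun t => -(k t + h t + (r t + rb t)) / 2)
    (a₂ := fun t => -(3 * (l t + p t) + (r t - rb t)) / 2)
    (b₁ := fun t => -(2 * p t + (r t - rb t) / 2))
    (b₂ := fun t => -(2 * k t + (r t + rb t) / 2))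
    (c₁ := fun t => -(P t + p t * (4 * (η + 1) + t * (k t + h t)) / 2))
    (c₂ := fun t => -(2 * (η + 1) * k t + t * k t ^ 2 / 2)
      + t * (l t ^ 2 + l t * p t + p t ^ 2) / 2)
    (c₃ := fun t => -(k t + (r t + rb t)))
    (by fun_prop) (by fun_prop) (by fun_prop) (by fun_prop) (by fun_prop) (by fun_prop)
    (by fun_prop) (by fun_prop) (by fun_prop) (by fun_prop)
    (by
      filter_upwards [hsysf, hsysg, ek, eh, el, ep, dk, dh, deriv_sub_ev hk hh,
        self_mem_nhdsWithin] with t sf sg ek eh el ep dk dh ds ht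
      have ht' : t ≠ 0 := ht
      have e1 := sf.1
      have e2 := sg.1
      rw [ek, el, dk] at e1
      rw [eh, ep, dh] at e2
      rw [ds]
      field_simp at e1 e2 ⊢
      apply mul_left_cancel₀ ht'
      linear_combination e1 - e2)
    (by
      filter_upwards [hsysf, hsysg, ek, eh, el, ep, eM, eP, dl, dp, deriv_sub_ev hl hp,
        self_mem_nhdsWithin] with t sf sg ek eh el ep eM eP dl dp ds ht
      have ht' : t ≠ 0 := ht
      have e1 := sf.2.1
      have e2 := sg.2.1
      rw [ek, el, eM, dl] at e1
      rw [eh, ep, eP, dp] at e2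
      rw [ds]
      field_simp at e1 e2 ⊢
      apply mul_left_cancel₀ ht'
      linear_combination e1 - e2)
    (by
      filter_upwards [hsysf, hsysg, ek, eh, el, ep, eM, eP, dM, dP, deriv_sub_ev hM hP,
        self_mem_nhdsWithin] with t sf sg ek eh el ep eM eP dM dP ds ht
      have ht' : t ≠ 0 := ht
      have e1 := sf.2.2
      have e2 := sg.2.2
      rw [ek, el, eM, dM] at e1
      rw [eh, ep, eP, dP] at e2
      rw [ds]
      field_simp at e1 e2 ⊢
      linear_combination e1 - e2)
  filter_upwards [ek, eh, el, ep, eM, eP, r1.filter_mono nhdsWithin_le_nhds,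
    r2.filter_mono nhdsWithin_le_nhds, r3.filter_mono nhdsWithin_le_nhds]
    with t ek eh el ep eM eP r1 r2 r3
  rw [ek, eh, el, ep, eM, eP, sub_eq_zero.mp r1, sub_eq_zero.mp r2, sub_eq_zero.mp r3]
  simp
end

section
/- Let ω₀ ∈ ℂ× satisfy ω₀·q(ω₀ t) = q̄(t) and ω₀·q̄(ω₀ t) = q(t) for all t in a punctured neighbourhood of 0. Let f₁, f₂, f₃ be analytic at 0, not all identically zero on a neighbourhood of 0, satisfying the coupled Riccati system on a punctured neighbourhood of 0 as well as the equivariance relations f₁(t) = ω₀·f₁(ω₀ t), f₂(t) = −ω₀·f₂(ω₀ t) and f₃(t) = −ω₀²·f₃(ω₀ t) for all t in a neighbourhood of 0. Then ω₀^{η+1} = 1, or ω₀^{η+1} = −1, or ω₀^{2(η+1)} = −1; in particular ω₀^{4(η+1)} = 1. -/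
open Filter Topology

/-- Indicial equation at the origin. -/
lemma indicial (F h k : ℂ → ℂ) (c : ℂ) (n : ℕ) (hh : AnalyticAt ℂ h 0) (h0 : h 0 ≠ 0)
    (hk : ContinuousAt k 0) (hF : ∀ᶠ t in 𝓝 (0 : ℂ), F t = t ^ n * h t)
    (hE : ∀ᶠ t in 𝓝[≠] (0 : ℂ), deriv F t - c / t * F t = t ^ n * k t) : (n : ℂ) = c := by
  have hd : ∀ᶠ t in 𝓝 (0 : ℂ), deriv F t = n * t ^ (n - 1) * h t + t ^ n * deriv h t := by
    filter_upwards [hF.eventually_nhds, hh.eventually_analyticAt] with t ht hht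
    have e : F =ᶠ[𝓝 t] fun s => s ^ n * h s := ht
    rw [e.deriv_eq]
    exact ((hasDerivAt_pow n t).mul hht.differentiableAt.hasDerivAt).deriv
  have key : ∀ᶠ t in 𝓝[≠] (0 : ℂ), ((n : ℂ) - c) * h t + t * deriv h t - t * k t = 0 := by
    filter_upwards [hE, hd.filter_mono nhdsWithin_le_nhds, hF.filter_mono nhdsWithin_le_nhds,
      self_mem_nhdsWithin] with t h1 h2 h3 h4
    have ht : t ≠ 0 := h4
    rw [h2, h3] at h1
    have hp : (n : ℂ) * t ^ (n - 1) * t = n * t ^ n := by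
      rcases n with _ | n
      · simp
      · simp [pow_succ, mul_assoc]
    have hc : c / t * t = c := by field_simp
    have : t ^ n * (((n : ℂ) - c) * h t + t * deriv h t - t * k t) = 0 := by
      linear_combination t * h1 - h t * hp + t ^ n * h t * hc
    exact (mul_eq_zero.mp this).resolve_left (pow_ne_zero n ht)
  have hcont : ContinuousAt (fun t => ((n : ℂ) - c) * h t + t * deriv h t - t * k t) 0 :=
    ((continuousAt_const.mul hh.continuousAt).add
      (continuousAt_id.mul hh.deriv.continuousAt)).sub (continuousAt_id.mul hk)
  have l1 := hcont.tendsto.mono_left (nhdsWithin_le_nhds (s := {(0 : ℂ)}ᶜ))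
  have l2 := (tendsto_const_nhds (x := (0 : ℂ)) (f := 𝓝[≠] (0 : ℂ))).congr'
    (key.mono fun t ht => ht.symm)
  have := tendsto_nhds_unique l1 l2
  simp only [zero_mul, add_zero, sub_zero, mul_eq_zero, h0, or_false] at this
  exact sub_eq_zero.mp this

/-- Equivariance constraint on the leading exponent. -/
lemma equivar (F h : ℂ → ℂ) (c w : ℂ) (n : ℕ) (hh : ContinuousAt h 0) (h0 : h 0 ≠ 0)
    (hF : ∀ᶠ t in 𝓝 (0 : ℂ), F t = t ^ n * h t)
    (hE : ∀ᶠ t in 𝓝 (0 : ℂ), F t = c * F (w * t)) : c * w ^ n = 1 := by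
  have hw : Tendsto (fun t : ℂ => w * t) (𝓝 0) (𝓝 0) := by
    have : ContinuousAt (fun t : ℂ => w * t) 0 := by fun_prop
    simpa [ContinuousAt] using this
  have key : ∀ᶠ t in 𝓝[≠] (0 : ℂ), h t - c * w ^ n * h (w * t) = 0 := by
    filter_upwards [hE.filter_mono nhdsWithin_le_nhds, hF.filter_mono nhdsWithin_le_nhds,
      (hw.eventually hF).filter_mono nhdsWithin_le_nhds, self_mem_nhdsWithin] with t h1 h2 h3 h4
    have ht : t ≠ 0 := h4
    rw [h2, h3, mul_pow] at h1
    have : t ^ n * (h t - c * w ^ n * h (w * t)) = 0 := by linear_combination h1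
    exact (mul_eq_zero.mp this).resolve_left (pow_ne_zero n ht)
  have l1 : Tendsto (fun t => h t - c * w ^ n * h (w * t)) (𝓝[≠] 0)
      (𝓝 (h 0 - c * w ^ n * h 0)) :=
    (hh.tendsto.sub (tendsto_const_nhds.mul (hh.tendsto.comp hw))).mono_left nhdsWithin_le_nhds
  have l2 := (tendsto_const_nhds (x := (0 : ℂ)) (f := 𝓝[≠] (0 : ℂ))).congr'
    (key.mono fun t ht => ht.symm)
  have := tendsto_nhds_unique l1 l2
  have : h 0 * (1 - c * w ^ n) = 0 := by linear_combination this
  exact (sub_eq_zero.mp ((mul_eq_zero.mp this).resolve_left h0)).symm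

lemma factor (F : ℂ → ℂ) (hF : AnalyticAt ℂ F 0) (hn : ¬ ∀ᶠ t in 𝓝 (0 : ℂ), F t = 0) :
    ∃ (n : ℕ) (h : ℂ → ℂ), AnalyticAt ℂ h 0 ∧ h 0 ≠ 0 ∧ ∀ᶠ t in 𝓝 (0 : ℂ), F t = t ^ n * h t := by
  obtain ⟨n, h, a, b, e⟩ := hF.exists_eventuallyEq_pow_smul_nonzero_iff.mpr hn
  exact ⟨n, h, a, b, by simpa using e⟩

lemma raise (F h : ℂ → ℂ) (n m : ℕ) (hnm : n ≤ m) (hh : AnalyticAt ℂ h 0)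
    (hF : ∀ᶠ t in 𝓝 (0 : ℂ), F t = t ^ m * h t) :
    ∃ g : ℂ → ℂ, AnalyticAt ℂ g 0 ∧ ∀ᶠ t in 𝓝 (0 : ℂ), F t = t ^ n * g t := by
  refine ⟨fun t => t ^ (m - n) * h t, (analyticAt_id.pow _).mul hh, hF.mono fun t ht => ?_⟩
  rw [ht, ← mul_assoc, ← pow_add, Nat.add_sub_cancel' hnm]

lemma zeroFactor (F : ℂ → ℂ) (n : ℕ) (hF : ∀ᶠ t in 𝓝 (0 : ℂ), F t = 0) :
    ∃ g : ℂ → ℂ, AnalyticAt ℂ g 0 ∧ ∀ᶠ t in 𝓝 (0 : ℂ), F t = t ^ n * g t :=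
  ⟨fun _ => 0, analyticAt_const, by simpa using hF⟩

lemma common (F G : ℂ → ℂ) (hF : AnalyticAt ℂ F 0) (hG : AnalyticAt ℂ G 0)
    (hn : ¬ ((∀ᶠ t in 𝓝 (0 : ℂ), F t = 0) ∧ ∀ᶠ t in 𝓝 (0 : ℂ), G t = 0)) :
    ∃ (m : ℕ) (g k : ℂ → ℂ), AnalyticAt ℂ g 0 ∧ AnalyticAt ℂ k 0 ∧ (g 0 ≠ 0 ∨ k 0 ≠ 0) ∧
      (∀ᶠ t in 𝓝 (0 : ℂ), F t = t ^ m * g t) ∧ ∀ᶠ t in 𝓝 (0 : ℂ), G t = t ^ m * k t := by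
  by_cases zF : ∀ᶠ t in 𝓝 (0 : ℂ), F t = 0
  · obtain ⟨m, k, hk, k0, ek⟩ := factor G hG fun z => hn ⟨zF, z⟩
    obtain ⟨g, hg, eg⟩ := zeroFactor F m zF
    exact ⟨m, g, k, hg, hk, Or.inr k0, eg, ek⟩
  obtain ⟨a, g, hg, g0, eg⟩ := factor F hF zF
  by_cases zG : ∀ᶠ t in 𝓝 (0 : ℂ), G t = 0
  · obtain ⟨k, hk, ek⟩ := zeroFactor G a zG
    exact ⟨a, g, k, hg, hk, Or.inl g0, eg, ek⟩
  obtain ⟨b, k, hk, k0, ek⟩ := factor G hG zG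
  rcases le_total a b with h | h
  · obtain ⟨k', hk', ek'⟩ := raise G k a b h hk ek
    exact ⟨a, g, k', hg, hk', Or.inl g0, eg, ek'⟩
  · obtain ⟨g', hg', eg'⟩ := raise F g b a h hg eg
    exact ⟨b, g', k, hg', hk, Or.inr k0, eg', ek⟩

/-- constraints on ω₀ for the existence of a nonzero analytic,
equivariant solution of the coupled Riccati system. -/
theorem stmt_11 (η : ℕ) (r rb f₁ f₂ f₃ : ℂ → ℂ) (ω₀ : ℂ) (hω₀ : ω₀ ≠ 0)
    (hr : AnalyticAt ℂ r 0) (hrb : AnalyticAt ℂ rb 0)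
    (hq : ∀ᶠ t in 𝓝[≠] (0 : ℂ), ω₀ * riccatiQ η r (ω₀ * t) = riccatiQ η rb t)
    (hqb : ∀ᶠ t in 𝓝[≠] (0 : ℂ), ω₀ * riccatiQ η rb (ω₀ * t) = riccatiQ η r t)
    (h₁ : AnalyticAt ℂ f₁ 0) (h₂ : AnalyticAt ℂ f₂ 0) (h₃ : AnalyticAt ℂ f₃ 0)
    (hnz : ¬ ∀ᶠ t in 𝓝 (0 : ℂ), f₁ t = 0 ∧ f₂ t = 0 ∧ f₃ t = 0)
    (hsys : CoupledRiccatiSystem η r rb f₁ f₂ f₃)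
    (he₁ : ∀ᶠ t in 𝓝 (0 : ℂ), f₁ t = ω₀ * f₁ (ω₀ * t))
    (he₂ : ∀ᶠ t in 𝓝 (0 : ℂ), f₂ t = -(ω₀ * f₂ (ω₀ * t)))
    (he₃ : ∀ᶠ t in 𝓝 (0 : ℂ), f₃ t = -(ω₀ ^ 2 * f₃ (ω₀ * t))) :
    (ω₀ ^ (η + 1) = 1 ∨ ω₀ ^ (η + 1) = -1 ∨ ω₀ ^ (2 * (η + 1)) = -1) ∧
      ω₀ ^ (4 * (η + 1)) = 1 := by
  suffices H : ω₀ ^ (η + 1) = 1 ∨ ω₀ ^ (η + 1) = -1 ∨ ω₀ ^ (2 * (η + 1)) = -1 by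
    refine ⟨H, ?_⟩
    rcases H with H | H | H
    · rw [mul_comm, pow_mul, H, one_pow]
    · rw [mul_comm, pow_mul, H]; norm_num
    · rw [show 4 * (η + 1) = 2 * (η + 1) * 2 by ring, pow_mul, H]; norm_num
  have c1 := h₁.continuousAt
  have c2 := h₂.continuousAt
  have cr := hr.continuousAt
  have crb := hrb.continuousAt
  -- third equation
  have E3 : ∀ (n : ℕ) (h g : ℂ → ℂ), AnalyticAt ℂ h 0 → h 0 ≠ 0 → AnalyticAt ℂ g 0 →
      (∀ᶠ t in 𝓝 (0 : ℂ), f₃ t = t ^ n * h t) → (∀ᶠ t in 𝓝 (0 : ℂ), f₂ t = t ^ n * g t) →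
      n = 2 * η := by
    intro n h g hh h0 hg e3 e2
    have ch := hh.continuousAt
    have cg := hg.continuousAt
    have := indicial f₃ h
      (fun t => -(f₁ t * h t + g t * (f₁ t ^ 2 - f₂ t ^ 2) / 2 + (r t + rb t) * h t))
      (2 * η) n hh h0 (by fun_prop) e3 (by
        filter_upwards [hsys, e3.filter_mono nhdsWithin_le_nhds,
          e2.filter_mono nhdsWithin_le_nhds] with t ht a3 a2
        have h3 := ht.2.2
        simp only [riccatiQ] at h3
        linear_combination h3 / 2 - (f₁ t + r t + rb t) * a3 - (f₁ t ^ 2 - f₂ t ^ 2) / 2 * a2)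
    exact_mod_cast this
  have third : ∀ h : ℂ → ℂ, AnalyticAt ℂ h 0 → h 0 ≠ 0 →
      (∀ᶠ t in 𝓝 (0 : ℂ), f₃ t = t ^ (2 * η) * h t) → ω₀ ^ (2 * (η + 1)) = -1 := by
    intro h hh h0 e3
    have := equivar f₃ h (-ω₀ ^ 2) ω₀ (2 * η) hh.continuousAt h0 e3
      (he₃.mono fun t ht => by rw [ht]; ring)
    rw [show 2 * (η + 1) = 2 + 2 * η by ring, pow_add]
    linear_combination -this
  by_cases z12 : (∀ᶠ t in 𝓝 (0 : ℂ), f₁ t = 0) ∧ ∀ᶠ t in 𝓝 (0 : ℂ), f₂ t = 0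
  · have z3 : ¬ ∀ᶠ t in 𝓝 (0 : ℂ), f₃ t = 0 := fun z => hnz (z12.1.and (z12.2.and z))
    obtain ⟨n, h, hh, h0, e3⟩ := factor f₃ h₃ z3
    obtain ⟨g, hg, e2⟩ := zeroFactor f₂ n z12.2
    obtain rfl := E3 n h g hh h0 hg e3 e2
    exact Or.inr (Or.inr (third h hh h0 e3))
  obtain ⟨m, g1, g2, hg1, hg2, hne, e1, e2⟩ := common f₁ f₂ h₁ h₂ z12
  have alt : ω₀ ^ (2 * (η + 1)) = -1 ∨
      ∃ g : ℂ → ℂ, AnalyticAt ℂ g 0 ∧ ∀ᶠ t in 𝓝 (0 : ℂ), f₃ t = t ^ m * g t := by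
    by_cases z3 : ∀ᶠ t in 𝓝 (0 : ℂ), f₃ t = 0
    · exact Or.inr (zeroFactor f₃ m z3)
    obtain ⟨n, h, hh, h0, e3⟩ := factor f₃ h₃ z3
    rcases le_total m n with hmn | hmn
    · exact Or.inr (raise f₃ h m n hmn hh e3)
    · obtain ⟨g, hg, e2'⟩ := raise f₂ g2 n m hmn hg2 e2
      obtain rfl := E3 n h g hh h0 hg e3 e2'
      exact Or.inl (third h hh h0 e3)
  rcases alt with alt | ⟨g3, hg3, e3⟩
  · exact Or.inr (Or.inr alt)
  have cg1 := hg1.continuousAt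
  have cg2 := hg2.continuousAt
  have cg3 := hg3.continuousAt
  rcases hne with g0 | g0
  · left
    have hm := indicial f₁ g1
      (fun t => -(f₁ t * g1 t + 3 * f₂ t * g2 t + (r t + rb t) * g1 t + (r t - rb t) * g2 t) / 2)
      η m hg1 g0 (by fun_prop) e1 (by
        filter_upwards [hsys, e1.filter_mono nhdsWithin_le_nhds,
          e2.filter_mono nhdsWithin_le_nhds] with t ht a1 a2
        have h3 := ht.1
        simp only [riccatiQ] at h3
        linear_combination h3 / 2 - (f₁ t + r t + rb t) / 2 * a1
          - (3 * f₂ t + r t - rb t) / 2 * a2)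
    obtain rfl : m = η := by exact_mod_cast hm
    have := equivar f₁ g1 ω₀ ω₀ m cg1 g0 e1 he₁
    rw [pow_succ']; exact this
  · right; left
    have hm := indicial f₂ g2
      (fun t => -(4 * f₁ t * g2 t - 2 * g3 t + (r t + rb t) * g2 t + (r t - rb t) * g1 t) / 2)
      η m hg2 g0 (by fun_prop) e2 (by
        filter_upwards [hsys, e1.filter_mono nhdsWithin_le_nhds,
          e2.filter_mono nhdsWithin_le_nhds, e3.filter_mono nhdsWithin_le_nhds] with t ht a1 a2 a3
        have h3 := ht.2.1
        simp only [riccatiQ] at h3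
        linear_combination h3 / 2 - (4 * f₁ t + r t + rb t) / 2 * a2
          - (r t - rb t) / 2 * a1 + a3)
    obtain rfl : m = η := by exact_mod_cast hm
    have := equivar f₂ g2 (-ω₀) ω₀ m cg2 g0 e2 (he₂.mono fun t ht => by rw [ht]; ring)
    rw [pow_succ']
    linear_combination -this
end

section
/- Let A be a finite-type generalized Cartan-type integer matrix on a finite index set I and let ν be a diagram automorphism of A. For every orbit 𝒪 ⊆ I of ν, the integer Σ_{i∈𝒪} A(i,j) does not depend on the choice of j ∈ 𝒪; moreover, writing ℓ_𝒪 := 3 − Σ_{i∈𝒪} A(i,j) for any j ∈ 𝒪, one has ℓ_𝒪 ∈ {1, 2}, and consequently ℓ_𝒪 · Σ_{i∈𝒪} A(i,j) = 2. -/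
/-- for a finite-type generalized Cartan matrix with a diagram
automorphism ν, the column sums over a ν-orbit are independent of the column
chosen in the orbit, the associated integer ℓ = 3 − Σ lies in {1, 2}, and
ℓ · Σ = 2. -/
theorem stmt_12 {I : Type*} [Fintype I] [DecidableEq I]
    (A : I → I → ℤ)
    (hdiag : ∀ i, A i i = 2)
    (hoff : ∀ i j, i ≠ j → A i j ≤ 0)
    (hfin : ∃ d : I → ℝ, (∀ i, 0 < d i) ∧ (∀ i j, d i * (A i j : ℝ) = d j * (A j i : ℝ)) ∧
      Matrix.PosDef (Matrix.of fun i j => d i * (A i j : ℝ)))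
    (ν : Equiv.Perm I)
    (hν : ∀ i j, A (ν i) (ν j) = A i j)
    (O : Finset I) (i₀ : I)
    (hO : ∀ i, i ∈ O ↔ ∃ k : ℕ, (ν ^ k) i₀ = i) :
    (∀ j ∈ O, ∀ j' ∈ O, ∑ i ∈ O, A i j = ∑ i ∈ O, A i j') ∧
    ∀ j ∈ O, (3 - ∑ i ∈ O, A i j = 1 ∨ 3 - ∑ i ∈ O, A i j = 2) ∧
      (3 - ∑ i ∈ O, A i j) * (∑ i ∈ O, A i j) = 2 := by
  classical
  have hmap : O.map ν.toEmbedding = O := by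
    apply Finset.eq_of_subset_of_card_le
    · intro x hx
      obtain ⟨i, hi, rfl⟩ := Finset.mem_map.1 hx
      obtain ⟨k, hk⟩ := (hO i).1 hi
      refine (hO _).2 ⟨k + 1, ?_⟩
      rw [pow_succ', Equiv.Perm.mul_apply, hk]
      rfl
    · simp
  have hstep : ∀ j, ∑ i ∈ O, A i (ν j) = ∑ i ∈ O, A i j := by
    intro j
    conv_lhs => rw [← hmap]
    rw [Finset.sum_map]
    exact Finset.sum_congr rfl fun i _ => hν i j
  have hk : ∀ k : ℕ, ∑ i ∈ O, A i ((ν ^ k) i₀) = ∑ i ∈ O, A i i₀ := by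
    intro k
    induction k with
    | zero => simp
    | succ k ih => rw [pow_succ', Equiv.Perm.mul_apply, hstep, ih]
  have hconst : ∀ j ∈ O, ∑ i ∈ O, A i j = ∑ i ∈ O, A i i₀ := by
    intro j hj
    obtain ⟨k, rfl⟩ := (hO j).1 hj
    exact hk k
  have hi₀ : i₀ ∈ O := (hO _).2 ⟨0, rfl⟩
  have hle : ∑ i ∈ O, A i i₀ ≤ 2 := by
    rw [← Finset.add_sum_erase O _ hi₀, hdiag]
    have : ∑ i ∈ O.erase i₀, A i i₀ ≤ 0 :=
      Finset.sum_nonpos fun i hi => hoff _ _ (Finset.ne_of_mem_erase hi)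
    linarith
  have hpos : 0 < ∑ i ∈ O, A i i₀ := by
    obtain ⟨d, hd, -, hP⟩ := hfin
    let y : I → ℝ := fun i => if i ∈ O then (d i)⁻¹ else 0
    have hy : y ≠ 0 := by
      intro h
      have h1 := congrFun h i₀
      simp only [y, hi₀, if_true, Pi.zero_apply] at h1
      exact (inv_pos.2 (hd i₀)).ne' h1
    have h := hP.dotProduct_mulVec_pos hy
    have e : star y ⬝ᵥ (Matrix.of fun i j => d i * (A i j : ℝ)).mulVec y
        = ((∑ i ∈ O, A i i₀ : ℤ) : ℝ) * ∑ j ∈ O, (d j)⁻¹ := by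
      have e1 : star y ⬝ᵥ (Matrix.of fun i j => d i * (A i j : ℝ)).mulVec y
          = ∑ i ∈ O, ∑ j ∈ O, (A i j : ℝ) * (d j)⁻¹ := by
        simp only [dotProduct, Matrix.mulVec, Matrix.of_apply, y, Pi.star_apply, star_trivial,
          ite_mul, mul_ite, zero_mul, mul_zero, Finset.sum_ite_mem, Finset.univ_inter]
        refine Finset.sum_congr rfl fun i _ => ?_
        rw [Finset.mul_sum]
        refine Finset.sum_congr rfl fun j _ => ?_
        have := (hd i).ne'
        field_simp
      rw [e1, Finset.sum_comm, Finset.mul_sum]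
      refine Finset.sum_congr rfl fun j hj => ?_
      rw [← hconst j hj, ← Finset.sum_mul]
      push_cast
      rfl
    rw [e] at h
    have h2 : 0 < ∑ j ∈ O, (d j)⁻¹ :=
      Finset.sum_pos (fun j _ => inv_pos.2 (hd j)) ⟨i₀, hi₀⟩
    exact_mod_cast (pos_iff_pos_of_mul_pos h).2 h2
  refine ⟨fun j hj j' hj' => (hconst j hj).trans (hconst j' hj').symm, fun j hj => ?_⟩
  rw [hconst j hj]
  generalize ∑ i ∈ O, A i i₀ = s at hle hpos
  have : s = 1 ∨ s = 2 := by omega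
  rcases this with rfl | rfl <;> norm_num
end

section
/- The quadratic cyclotomic Gaudin Hamiltonians pairwise commute: ℋ_i · ℋ_j = ℋ_j · ℋ_i in U(𝔤)^{⊗N} for all i, j ∈ {1, …, N}. -/
open scoped BigOperators

/-- The i-th quadratic cyclotomic Gaudin Hamiltonian ℋ_i, as an element of an
algebra A receiving commuting embeddings ι j : U(𝔤) → A of the tensor factors
of U(𝔤)^{⊗N}. -/
noncomputable def cycGaudinHam
    {g : Type*} [LieRing g] [LieAlgebra ℂ g]
    {A : Type*} [Ring A] [Algebra ℂ A]
    {κ : Type*} [Fintype κ]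
    (Iup Idown : κ → g)
    (σ : Module.End ℂ g)
    (T : ℕ) (ω : ℂ)
    {N : ℕ} (z : Fin N → ℂ)
    (ι : Fin N → (UniversalEnvelopingAlgebra ℂ g →ₐ[ℂ] A))
    (i : Fin N) : A :=
  (∑ k ∈ Finset.range T, ∑ j ∈ Finset.univ.erase i, ∑ a : κ,
    (z i - ω ^ (-(k : ℤ)) * z j)⁻¹ •
      (ι i (UniversalEnvelopingAlgebra.ι ℂ (Iup a)) *
        ι j (UniversalEnvelopingAlgebra.ι ℂ ((σ ^ k) (Idown a)))))
  + ∑ k ∈ Finset.Ico 1 T, ∑ a : κ,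
      ((1 - ω ^ k) * z i)⁻¹ •
        ι i (UniversalEnvelopingAlgebra.ι ℂ (Iup a) *
          UniversalEnvelopingAlgebra.ι ℂ ((σ ^ k) (Idown a)))

set_option linter.unusedSectionVars false
set_option linter.unusedSimpArgs false

namespace CycGaudin

/-- The properties of the dual bases and of the action of the cyclic group that are used. -/
structure Cas {g : Type*} [LieRing g] [LieAlgebra ℂ g]
    (A : Type*) [Ring A] [Algebra ℂ A] {κ : Type*} [Fintype κ]
    {G : Type*} [AddCommGroup G]
    (u d : κ → g) (S : G → g →ₗ[ℂ] g) : Prop where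
  symm : ∀ F : g →ₗ[ℂ] g →ₗ[ℂ] A, ∑ a, F (u a) (d a) = ∑ a, F (d a) (u a)
  inv : ∀ (F : g →ₗ[ℂ] g →ₗ[ℂ] A) (y : g),
    ∑ a, F ⁅y, u a⁆ (d a) = -∑ a, F (u a) ⁅y, d a⁆
  sig : ∀ (F : g →ₗ[ℂ] g →ₗ[ℂ] A) (k : G),
    ∑ a, F (S k (u a)) (d a) = ∑ a, F (u a) (S (-k) (d a))
  S_add : ∀ k m x, S (k + m) x = S k (S m x)
  S_zero : ∀ x, S 0 x = x
  S_lie : ∀ k x y, S k ⁅x, y⁆ = ⁅S k x, S k y⁆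

section
variable {g : Type*} [LieRing g] [LieAlgebra ℂ g]
  {A : Type*} [Ring A] [Algebra ℂ A] {κ : Type*} [Fintype κ]
  {G : Type*} [AddCommGroup G]

theorem adj_sum (B : g →ₗ[ℂ] g →ₗ[ℂ] ℂ)
    (hBsymm : ∀ x y : g, B x y = B y x)
    (hBnd : ∀ x : g, (∀ y : g, B x y = 0) → x = 0)
    (u d : κ → g) (hc : ∀ x : g, ∑ a : κ, B x (d a) • u a = x)
    (φ ψ : g → g) (h : ∀ x y, B (φ x) y = B x (ψ y))
    (F : g →ₗ[ℂ] g →ₗ[ℂ] A) :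
    ∑ a, F (φ (u a)) (d a) = ∑ a, F (u a) (ψ (d a)) := by
  have hc' : ∀ x : g, ∑ a : κ, B (u a) x • d a = x := by
    intro x
    rw [← sub_eq_zero]
    apply hBnd
    intro y
    rw [hBsymm, map_sub, map_sum, sub_eq_zero]
    conv_rhs => rw [← hc y]
    simp only [map_sum, map_smul, LinearMap.sum_apply, LinearMap.smul_apply, smul_eq_mul]
    exact Finset.sum_congr rfl fun _ _ => mul_comm _ _
  have e1 : ∀ a, F (φ (u a)) (d a) = ∑ b, B (u a) (ψ (d b)) • F (u b) (d a) := by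
    intro a
    conv_lhs => rw [← hc (φ (u a))]
    simp [h]
  have e2 : ∀ b, F (u b) (ψ (d b)) = ∑ a, B (u a) (ψ (d b)) • F (u b) (d a) := by
    intro b
    conv_lhs => rw [← hc' (ψ (d b))]
    simp
  simp only [e1, e2]
  exact Finset.sum_comm

theorem symm_sum (B : g →ₗ[ℂ] g →ₗ[ℂ] ℂ)
    (hBsymm : ∀ x y : g, B x y = B y x)
    (u d : κ → g) (hc : ∀ x : g, ∑ a : κ, B x (d a) • u a = x)
    (F : g →ₗ[ℂ] g →ₗ[ℂ] A) :
    ∑ a, F (u a) (d a) = ∑ a, F (d a) (u a) := by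
  have e1 : ∀ a, F (u a) (d a) = ∑ b, B (d a) (d b) • F (u a) (u b) := by
    intro a
    conv_lhs => rw [← hc (d a)]
    simp
  have e2 : ∀ b, F (d b) (u b) = ∑ a, B (d a) (d b) • F (u a) (u b) := by
    intro b
    conv_lhs => rw [← hc (d b)]
    simp [hBsymm]
  simp only [e1, e2]
  exact Finset.sum_comm

/-- The Casimir pairing of two linear maps into an algebra. -/
def Om (u d : κ → g) (X Y : g →ₗ[ℂ] A) : A := ∑ a, X (u a) * Y (d a)

/-- Linear map intertwining the bracket with the commutator. -/
def IsL (X : g →ₗ[ℂ] A) : Prop := ∀ x y, ⁅X x, X y⁆ = X ⁅x, y⁆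

/-- Two maps with commuting images. -/
def Com (X Y : g →ₗ[ℂ] A) : Prop := ∀ x y, ⁅X x, Y y⁆ = 0

variable {u d : κ → g} {S : G → g →ₗ[ℂ] g}

theorem lie_add (x y z : A) : ⁅x, y + z⁆ = ⁅x, y⁆ + ⁅x, z⁆ := by
  simp only [Ring.lie_def]; noncomm_ring

theorem add_lie (x y z : A) : ⁅x + y, z⁆ = ⁅x, z⁆ + ⁅y, z⁆ := by
  simp only [Ring.lie_def]; noncomm_ring

theorem lie_sub (x y z : A) : ⁅x, y - z⁆ = ⁅x, y⁆ - ⁅x, z⁆ := by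
  simp only [Ring.lie_def]; noncomm_ring

theorem lie_self (x : A) : ⁅x, x⁆ = 0 := by
  simp only [Ring.lie_def, sub_self]

theorem lie_zero (x : A) : ⁅x, (0 : A)⁆ = 0 := by
  simp only [Ring.lie_def, mul_zero, zero_mul, sub_self]

theorem lie_skew (x y : A) : -⁅y, x⁆ = ⁅x, y⁆ := by
  simp only [Ring.lie_def]; noncomm_ring

theorem lie_smul (c : ℂ) (x y : A) : ⁅x, c • y⁆ = c • ⁅x, y⁆ := by
  simp only [Ring.lie_def, mul_smul_comm, smul_mul_assoc, smul_sub]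

theorem smul_lie (c : ℂ) (x y : A) : ⁅c • x, y⁆ = c • ⁅x, y⁆ := by
  simp only [Ring.lie_def, mul_smul_comm, smul_mul_assoc, smul_sub]

theorem lie_sum {J : Type*} (s : Finset J) (f : J → A) (x : A) :
    ⁅x, ∑ j ∈ s, f j⁆ = ∑ j ∈ s, ⁅x, f j⁆ := by
  simp only [Ring.lie_def, Finset.mul_sum, Finset.sum_mul, Finset.sum_sub_distrib]

theorem sum_lie {J : Type*} (s : Finset J) (f : J → A) (x : A) :
    ⁅∑ j ∈ s, f j, x⁆ = ∑ j ∈ s, ⁅f j, x⁆ := by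
  simp only [Ring.lie_def, Finset.mul_sum, Finset.sum_mul, Finset.sum_sub_distrib]

theorem sum_lie_sum {J L : Type*} (s : Finset J) (t : Finset L) (a : J → ℂ) (b : L → ℂ)
    (f : J → A) (f' : L → A) :
    ⁅∑ j ∈ s, a j • f j, ∑ l ∈ t, b l • f' l⁆ = ∑ j ∈ s, ∑ l ∈ t, (a j * b l) • ⁅f j, f' l⁆ := by
  rw [sum_lie]
  refine Finset.sum_congr rfl fun j _ => ?_
  rw [lie_sum]
  refine Finset.sum_congr rfl fun l _ => ?_
  rw [smul_lie, lie_smul, smul_smul]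

theorem lie_mul' (x y z : A) : ⁅x, y * z⁆ = ⁅x, y⁆ * z + y * ⁅x, z⁆ := by
  simp only [Ring.lie_def]; noncomm_ring

theorem Com.symm {X Y : g →ₗ[ℂ] A} (h : Com X Y) : Com Y X := by
  intro x y
  rw [← lie_skew, h, neg_zero]

theorem Com.mul {X Y : g →ₗ[ℂ] A} (h : Com X Y) (x y : g) : X x * Y y = Y y * X x := by
  have := h x y
  rwa [Ring.lie_def, sub_eq_zero] at this

theorem Com.comp {X Y : g →ₗ[ℂ] A} (h : Com X Y) (f e : g →ₗ[ℂ] g) :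
    Com (X ∘ₗ f) (Y ∘ₗ e) := fun x y => h (f x) (e y)

theorem Com.compr {X Y : g →ₗ[ℂ] A} (h : Com X Y) (e : g →ₗ[ℂ] g) :
    Com X (Y ∘ₗ e) := fun x y => h x (e y)

theorem Cas.isL (hC : Cas A u d S) {X : g →ₗ[ℂ] A} (h : IsL X) (k : G) : IsL (X ∘ₗ S k) := by
  intro x y
  simp [h _ _, hC.S_lie]

theorem Cas.comp_comp (hC : Cas A u d S) (X : g →ₗ[ℂ] A) (k m : G) :
    (X ∘ₗ S k) ∘ₗ S m = X ∘ₗ S (k + m) := by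
  ext x; simp [hC.S_add]

theorem Cas.comp_zero (hC : Cas A u d S) (X : g →ₗ[ℂ] A) :
    X ∘ₗ S 0 = X := by
  ext x; simp [hC.S_zero]

theorem Cas.Om_symm (hC : Cas A u d S) {X Y : g →ₗ[ℂ] A} (h : Com X Y) :
    Om u d X Y = Om u d Y X := by
  have := hC.symm ((LinearMap.mul ℂ A).compl₁₂ X Y)
  simp only [LinearMap.compl₁₂_apply, LinearMap.mul_apply'] at this
  unfold Om
  rw [this]
  exact Finset.sum_congr rfl fun a _ => h.mul _ _

theorem Cas.Om_sig (hC : Cas A u d S) (X Y : g →ₗ[ℂ] A) (k : G) :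
    Om u d (X ∘ₗ S k) Y = Om u d X (Y ∘ₗ S (-k)) := by
  have := hC.sig ((LinearMap.mul ℂ A).compl₁₂ X Y) k
  simpa only [LinearMap.compl₁₂_apply, LinearMap.mul_apply', Om, LinearMap.comp_apply] using this

theorem Cas.Om_shift (hC : Cas A u d S) (X Y : g →ₗ[ℂ] A) (k m : G) :
    Om u d (X ∘ₗ S k) (Y ∘ₗ S m) = Om u d X (Y ∘ₗ S (m - k)) := by
  rw [hC.Om_sig, hC.comp_comp, sub_eq_add_neg]

theorem Cas.lie_Om (hC : Cas A u d S) (X Y : g →ₗ[ℂ] A) (Z : A) (y : g)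
    (hX : ∀ x, ⁅Z, X x⁆ = X ⁅y, x⁆) (hY : ∀ x, ⁅Z, Y x⁆ = Y ⁅y, x⁆) :
    ⁅Z, Om u d X Y⁆ = 0 := by
  have := hC.inv ((LinearMap.mul ℂ A).compl₁₂ X Y) y
  simp only [LinearMap.compl₁₂_apply, LinearMap.mul_apply'] at this
  simp only [Om, lie_sum, lie_mul', hX, hY, Finset.sum_add_distrib, this]
  simp

theorem lie_Om_zero {X Y : g →ₗ[ℂ] A} {Z : A}
    (hX : ∀ x, ⁅Z, X x⁆ = 0) (hY : ∀ x, ⁅Z, Y x⁆ = 0) : ⁅Z, Om u d X Y⁆ = 0 := by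
  simp [Om, lie_sum, lie_mul', hX, hY]

/-- The diagonal action commutes with the split Casimir. -/
theorem Cas.diag (hC : Cas A u d S) {X Y : g →ₗ[ℂ] A} (hX : IsL X) (hY : IsL Y)
    (h : Com X Y) (x : g) : ⁅Om u d X Y, (X + Y) x⁆ = 0 := by
  rw [← lie_skew, neg_eq_zero]
  apply hC.lie_Om X Y _ x
  · intro w; simp [add_lie, hX _ _, h.symm _ _]
  · intro w; simp [add_lie, hY _ _, h _ _]

theorem Om_add (X Y V : g →ₗ[ℂ] A) : Om u d V (X + Y) = Om u d V X + Om u d V Y := by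
  simp [Om, mul_add, Finset.sum_add_distrib]

theorem add_Om (X Y V : g →ₗ[ℂ] A) : Om u d (X + Y) V = Om u d X V + Om u d Y V := by
  simp [Om, add_mul, Finset.sum_add_distrib]

theorem Cas.three (hC : Cas A u d S) {X Y V : g →ₗ[ℂ] A} (hX : IsL X) (hY : IsL Y)
    (h : Com X Y) (hXV : Com X V) (hYV : Com Y V) :
    ⁅Om u d X Y, Om u d V X⁆ + ⁅Om u d X Y, Om u d V Y⁆ = 0 := by
  rw [← lie_add, ← Om_add]
  apply lie_Om_zero
  · intro x
    rw [← lie_skew, neg_eq_zero]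
    exact lie_Om_zero (fun y => hXV.symm _ _) (fun y => hYV.symm _ _)
  · exact hC.diag hX hY h

theorem Cas.three_a (hC : Cas A u d S) {X Y V : g →ₗ[ℂ] A} (hY : IsL Y)
    (hV : IsL V) (h : Com X Y) (hXV : Com X V) (hYV : Com Y V) :
    ⁅Om u d X V, Om u d Y V⁆ = -⁅Om u d X Y, Om u d Y V⁆ := by
  have := hC.three hY hV hYV h.symm hXV.symm
  rw [← lie_skew (Om u d X V), ← lie_skew (Om u d X Y), neg_neg, neg_eq_iff_add_eq_zero, add_comm]
  exact this

theorem Cas.three_b (hC : Cas A u d S) {X Y V : g →ₗ[ℂ] A} (hX : IsL X) (hY : IsL Y)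
    (h : Com X Y) (hXV : Com X V) (hYV : Com Y V) :
    ⁅Om u d X V, Om u d X Y⁆ = ⁅Om u d X Y, Om u d Y V⁆ := by
  have := hC.three hX hY h hXV hYV
  rw [hC.Om_symm hXV, hC.Om_symm hYV, ← lie_skew, neg_eq_iff_add_eq_zero]
  exact this

variable [Fintype G]

/-- The classical r-matrix part. -/
noncomputable def rr (u d : κ → g) (S : G → g →ₗ[ℂ] g) (w : G → ℂ) (x y : ℂ) (X Y : g →ₗ[ℂ] A) : A :=
  ∑ k, (x - w (-k) * y)⁻¹ • Om u d X (Y ∘ₗ S k)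

/-- The one-site part. -/
noncomputable def ss (u d : κ → g) (S : G → g →ₗ[ℂ] g) (w : G → ℂ) (X : g →ₗ[ℂ] A) : A :=
  ∑ k, (1 - w k)⁻¹ • Om u d X (X ∘ₗ S k)

theorem Cas.cybe (hC : Cas A u d S) {w : G → ℂ} (w0 : w 0 = 1)
    (wadd : ∀ k m, w (k + m) = w k * w m) {x y v : ℂ}
    (hxy : ∀ k, x - w k * y ≠ 0) (hxv : ∀ k, x - w k * v ≠ 0) (hyv : ∀ k, y - w k * v ≠ 0)
    {X Y V : g →ₗ[ℂ] A} (hX : IsL X) (hY : IsL Y) (hV : IsL V)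
    (h : Com X Y) (hXV : Com X V) (hYV : Com Y V) :
    ⁅rr u d S w x y X Y, rr u d S w y v Y V⁆ + ⁅rr u d S w x v X V, rr u d S w y v Y V⁆
      + ⁅rr u d S w x v X V, rr u d S w y x Y X⁆ = 0 := by
  set t : G → G → A := fun p q => ⁅Om u d X (Y ∘ₗ S p), Om u d (Y ∘ₗ S p) (V ∘ₗ S q)⁆ with ht
  have e1 : ⁅rr u d S w x y X Y, rr u d S w y v Y V⁆ =
      ∑ p, ∑ q, ((x - w (-p) * y)⁻¹ * (y - w (-(q - p)) * v)⁻¹) • t p q := by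
    simp only [rr, sum_lie_sum]
    refine Finset.sum_congr rfl fun p _ => ?_
    rw [← Equiv.sum_comp (Equiv.subRight p)]
    simp only [Equiv.subRight_apply, ht, hC.Om_shift]
  have e2 : ⁅rr u d S w x v X V, rr u d S w y v Y V⁆ =
      ∑ p, ∑ q, ((x - w (-q) * v)⁻¹ * (y - w (-(q - p)) * v)⁻¹) • -t p q := by
    rw [Finset.sum_comm]
    simp only [rr, sum_lie_sum]
    refine Finset.sum_congr rfl fun q _ => ?_
    rw [← Equiv.sum_comp (Equiv.subLeft q)]
    refine Finset.sum_congr rfl fun p _ => ?_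
    simp only [Equiv.subLeft_apply, ht]
    rw [← hC.three_a (hC.isL hY p) (hC.isL hV q) (h.compr _) (hXV.compr _) (hYV.comp _ _),
      hC.Om_shift]
  have e3 : ⁅rr u d S w x v X V, rr u d S w y x Y X⁆ =
      ∑ p, ∑ q, ((x - w (-q) * v)⁻¹ * (y - w p * x)⁻¹) • t p q := by
    rw [Finset.sum_comm]
    simp only [rr, sum_lie_sum]
    refine Finset.sum_congr rfl fun q _ => ?_
    rw [← Equiv.sum_comp (Equiv.neg G)]
    refine Finset.sum_congr rfl fun p _ => ?_
    simp only [Equiv.neg_apply, ht, neg_neg]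
    rw [← hC.three_b hX (hC.isL hY p) (h.compr _) (hXV.compr _) (hYV.comp _ _),
      hC.Om_symm (h.symm.compr _), hC.Om_sig, neg_neg]
  rw [e1, e2, e3, ← Finset.sum_add_distrib, ← Finset.sum_add_distrib]
  refine Finset.sum_eq_zero fun p _ => ?_
  rw [← Finset.sum_add_distrib, ← Finset.sum_add_distrib]
  refine Finset.sum_eq_zero fun q _ => ?_
  rw [smul_neg, ← neg_smul, ← add_smul, ← add_smul]
  convert zero_smul ℂ (t p q)
  have hp : w p * w (-p) = 1 := by rw [← wadd, add_neg_cancel, w0]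
  have h1 := hxy (-p)
  have h2 := hyv (-(q - p))
  have h3 := hxv (-q)
  have h4 : w (-(q-p)) = w p * w (-q) := by rw [← wadd]; congr 1; abel
  have h5 : y - w p * x = - w p * (x - w (-p) * y) := by linear_combination (-y) * hp
  have hp0 : w p ≠ 0 := left_ne_zero_of_mul_eq_one hp
  rw [h5]
  rw [h4] at h2 ⊢
  generalize w p = P at *
  generalize w (-p) = P' at *
  generalize w (-q) = Q at *
  field_simp
  linear_combination y * hp

theorem e_add {w : G → ℂ} (w0 : w 0 = 1) (wadd : ∀ k m, w (k + m) = w k * w m)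
    (w1 : ∀ k, k ≠ 0 → w k ≠ 1) [DecidableEq G] (k : G) :
    (1 - w k)⁻¹ + (1 - w (-k))⁻¹ = if k = 0 then 0 else 1 := by
  split_ifs with h
  · simp [h, w0]
  · have a := sub_ne_zero.2 (w1 k h).symm
    have b := sub_ne_zero.2 (w1 (-k) (neg_ne_zero.2 h)).symm
    have hp : w k * w (-k) = 1 := by rw [← wadd, add_neg_cancel, w0]
    field_simp
    linear_combination -hp

theorem Cas.lie_C (hC : Cas A u d S) {X : g →ₗ[ℂ] A} (hX : IsL X) (p : G) (y : g)
    (hy : S p y = y) : ⁅X y, Om u d X (X ∘ₗ S p)⁆ = 0 := by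
  apply hC.lie_Om _ _ _ y (hX y)
  intro x
  simp [hX _ _, hC.S_lie, hy]

theorem Cas.P_eq (hC : Cas A u d S) (X Y : g →ₗ[ℂ] A) :
    ∑ k, Om u d X (Y ∘ₗ S k) = Om u d (X ∘ₗ (∑ k, S k)) Y := by
  rw [← Equiv.sum_comp (Equiv.neg G)]
  simp only [Equiv.neg_apply, ← hC.Om_sig]
  simp only [Om, LinearMap.comp_apply, LinearMap.sum_apply, map_sum, Finset.sum_mul]
  exact Finset.sum_comm

theorem Cas.lie_ss_P (hC : Cas A u d S) (w : G → ℂ) {X Y : g →ₗ[ℂ] A} (hX : IsL X)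
    (h : Com X Y) : ⁅ss u d S w X, ∑ k, Om u d X (Y ∘ₗ S k)⁆ = 0 := by
  rw [hC.P_eq, ss, sum_lie]
  refine Finset.sum_eq_zero fun p _ => ?_
  rw [smul_lie]
  convert smul_zero _
  apply lie_Om_zero
  · intro x
    rw [← lie_skew, neg_eq_zero]
    apply hC.lie_C hX
    simp only [LinearMap.sum_apply, map_sum, ← hC.S_add]
    exact Equiv.sum_comp (Equiv.addLeft p) (fun k => S k x)
  · intro x
    rw [← lie_skew, neg_eq_zero]
    exact lie_Om_zero (h.symm x) (fun y => h.symm _ _)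

theorem Cas.key (hC : Cas A u d S) {w : G → ℂ} (w0 : w 0 = 1)
    (wadd : ∀ k m, w (k + m) = w k * w m) (w1 : ∀ k, k ≠ 0 → w k ≠ 1)
    {X Y : g →ₗ[ℂ] A} (hX : IsL X) (hY : IsL Y) (h : Com X Y) (k : G) :
    ⁅Om u d X (Y ∘ₗ S k), (∑ m, Om u d X (Y ∘ₗ S m)) + ss u d S w X + ss u d S w Y⁆ = 0 := by
  classical
  have hXZ := h.compr (S k)
  have e : (∑ m, Om u d X (Y ∘ₗ S m)) + ss u d S w X + ss u d S w Y
      = Om u d X (Y ∘ₗ S k) + ss u d S w (X + Y ∘ₗ S k) := by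
    have e1 : ss u d S w (X + Y ∘ₗ S k) = ss u d S w X + ss u d S w Y
        + ((∑ p, (1 - w p)⁻¹ • Om u d X (Y ∘ₗ S (k + p)))
          + ∑ p, (1 - w p)⁻¹ • Om u d X (Y ∘ₗ S (k - p))) := by
      simp only [ss, ← Finset.sum_add_distrib, ← smul_add]
      refine Finset.sum_congr rfl fun p _ => ?_
      congr 1
      rw [LinearMap.add_comp, add_Om, Om_add, Om_add, hC.comp_comp,
        ← hC.Om_symm (h.comp (S p) (S k)), hC.Om_shift, hC.Om_shift, add_sub_cancel_left]
      abel
    have e2 : (∑ p, (1 - w p)⁻¹ • Om u d X (Y ∘ₗ S (k + p)))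
          + ∑ p, (1 - w p)⁻¹ • Om u d X (Y ∘ₗ S (k - p))
        = (∑ m, Om u d X (Y ∘ₗ S m)) - Om u d X (Y ∘ₗ S k) := by
      rw [← Equiv.sum_comp (Equiv.neg G) (fun p => (1 - w p)⁻¹ • Om u d X (Y ∘ₗ S (k - p))),
        ← Finset.sum_add_distrib, ← Equiv.sum_comp (Equiv.addLeft k) (fun m => Om u d X (Y ∘ₗ S m))]
      simp only [Equiv.neg_apply, sub_neg_eq_add, ← add_smul, e_add w0 wadd w1,
        Equiv.coe_addLeft, ite_smul, zero_smul, one_smul]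
      rw [← Finset.add_sum_erase Finset.univ _ (Finset.mem_univ (0 : G)),
        ← Finset.add_sum_erase Finset.univ (fun m => Om u d X (Y ∘ₗ S (k + m)))
          (Finset.mem_univ (0 : G))]
      simp only [if_true, zero_add, add_zero, add_sub_cancel_left]
      refine Finset.sum_congr rfl fun m hm => ?_
      rw [if_neg (Finset.ne_of_mem_erase hm)]
    rw [e1, e2]
    abel
  rw [e, lie_add, lie_self, zero_add, ss, lie_sum]
  refine Finset.sum_eq_zero fun p _ => ?_
  rw [lie_smul]
  convert smul_zero _
  apply lie_Om_zero
  · exact hC.diag hX (hC.isL hY k) hXZ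
  · intro x
    exact hC.diag hX (hC.isL hY k) hXZ _

theorem Cas.two (hC : Cas A u d S) {w : G → ℂ} (w0 : w 0 = 1)
    (wadd : ∀ k m, w (k + m) = w k * w m) (w1 : ∀ k, k ≠ 0 → w k ≠ 1) {x y : ℂ}
    (hx : x ≠ 0) (hy : y ≠ 0) (hxy : ∀ k, x - w k * y ≠ 0)
    {X Y : g →ₗ[ℂ] A} (hX : IsL X) (hY : IsL Y) (h : Com X Y) :
    ⁅rr u d S w x y X Y, rr u d S w y x Y X⁆ + ⁅rr u d S w x y X Y, y⁻¹ • ss u d S w Y⁆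
      + ⁅x⁻¹ • ss u d S w X, rr u d S w y x Y X⁆ = 0 := by
  have e : rr u d S w y x Y X
      = y⁻¹ • ((∑ k, Om u d X (Y ∘ₗ S k)) - x • rr u d S w x y X Y) := by
    simp only [rr, Finset.smul_sum, ← Finset.sum_sub_distrib]
    rw [← Equiv.sum_comp (Equiv.neg G)]
    refine Finset.sum_congr rfl fun p _ => ?_
    simp only [Equiv.neg_apply, neg_neg]
    rw [hC.Om_symm (h.symm.compr _), hC.Om_sig, neg_neg, smul_smul, smul_sub, smul_smul,
      ← sub_smul]
    congr 1
    have hp : w p * w (-p) = 1 := by rw [← wadd, add_neg_cancel, w0]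
    have h1 := hxy (-p)
    have h5 : y - w p * x = - w p * (x - w (-p) * y) := by linear_combination (-y) * hp
    have hp0 : w p ≠ 0 := left_ne_zero_of_mul_eq_one hp
    rw [h5]
    generalize w p = P at *
    generalize w (-p) = P' at *
    field_simp
    linear_combination (y) * hp
  have hk : ⁅rr u d S w x y X Y,
      (∑ m, Om u d X (Y ∘ₗ S m)) + ss u d S w X + ss u d S w Y⁆ = 0 := by
    conv_lhs => rw [rr, sum_lie]
    refine Finset.sum_eq_zero fun p _ => ?_
    rw [smul_lie, hC.key w0 wadd w1 hX hY h, smul_zero]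
  have hP := hC.lie_ss_P w hX h
  rw [e]
  generalize rr u d S w x y X Y = R at *
  generalize (∑ m, Om u d X (Y ∘ₗ S m)) = P at *
  have e3 : ⁅x⁻¹ • ss u d S w X, y⁻¹ • (P - x • R)⁆ = y⁻¹ • ⁅R, ss u d S w X⁆ := by
    rw [smul_lie, lie_smul, lie_sub, hP, zero_sub, lie_smul, smul_comm x⁻¹ y⁻¹, smul_neg,
      smul_smul x⁻¹ x, inv_mul_cancel₀ hx, one_smul, lie_skew]
  have e1 : ⁅R, y⁻¹ • (P - x • R)⁆ = y⁻¹ • ⁅R, P⁆ := by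
    rw [lie_smul, lie_sub, lie_smul, lie_self, smul_zero, sub_zero]
  rw [e1, e3, lie_smul, ← smul_add, ← smul_add]
  rw [lie_add, lie_add] at hk
  rw [add_right_comm, hk, smul_zero]

theorem Cas.main (hC : Cas A u d S) {w : G → ℂ} (w0 : w 0 = 1)
    (wadd : ∀ k m, w (k + m) = w k * w m) (w1 : ∀ k, k ≠ 0 → w k ≠ 1)
    {I : Type*} [Fintype I] [DecidableEq I] {z : I → ℂ}
    (hz : ∀ i, z i ≠ 0) (hzz : ∀ i j, i ≠ j → ∀ k, z i - w k * z j ≠ 0)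
    {X : I → g →ₗ[ℂ] A} (hX : ∀ i, IsL (X i)) (h : ∀ i j, i ≠ j → Com (X i) (X j)) (i j : I) :
    ⁅(∑ l ∈ Finset.univ.erase i, rr u d S w (z i) (z l) (X i) (X l))
        + (z i)⁻¹ • ss u d S w (X i),
      (∑ l ∈ Finset.univ.erase j, rr u d S w (z j) (z l) (X j) (X l))
        + (z j)⁻¹ • ss u d S w (X j)⁆ = 0 := by
  by_cases hij : i = j
  · subst hij; exact lie_self _
  have hji : j ≠ i := Ne.symm hij
  set E := (Finset.univ.erase i).erase j with hE
  have m1 : ∀ l ∈ E, l ≠ i ∧ l ≠ j := by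
    intro l hl
    simp only [hE, Finset.mem_erase] at hl
    exact ⟨hl.2.1, hl.1⟩
  rw [← Finset.add_sum_erase (Finset.univ.erase i) _
      (Finset.mem_erase.2 ⟨hji, Finset.mem_univ j⟩),
    ← Finset.add_sum_erase (Finset.univ.erase j) _
      (Finset.mem_erase.2 ⟨hij, Finset.mem_univ i⟩), Finset.erase_right_comm (a := j) (b := i),
    ← hE]
  have comOm : ∀ a b c e : I, a ≠ c → a ≠ e → b ≠ c → b ≠ e → ∀ k m : G,
      ⁅Om u d (X a) (X b ∘ₗ S k), Om u d (X c) (X e ∘ₗ S m)⁆ = 0 := by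
    intro a b c e h1 h2 h3 h4 k m
    apply lie_Om_zero
    · intro x
      rw [← lie_skew, neg_eq_zero]
      exact lie_Om_zero (fun y => h _ _ h1.symm _ _) (fun y => h _ _ h3.symm _ _)
    · intro x
      rw [← lie_skew, neg_eq_zero]
      exact lie_Om_zero (fun y => h _ _ h2.symm _ _) (fun y => h _ _ h4.symm _ _)
  have rr_rr : ∀ a b c e : I, a ≠ c → a ≠ e → b ≠ c → b ≠ e →
      ⁅rr u d S w (z a) (z b) (X a) (X b), rr u d S w (z c) (z e) (X c) (X e)⁆ = 0 := by
    intro a b c e h1 h2 h3 h4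
    simp [rr, sum_lie_sum, comOm a b c e h1 h2 h3 h4]
  have rr_ss : ∀ a b c : I, a ≠ c → b ≠ c →
      ⁅rr u d S w (z a) (z b) (X a) (X b), ss u d S w (X c)⁆ = 0 := by
    intro a b c h1 h2
    simp [rr, ss, sum_lie_sum, comOm a b c c h1 h1 h2 h2]
  have ss_rr : ∀ a b c : I, a ≠ c → b ≠ c →
      ⁅ss u d S w (X c), rr u d S w (z a) (z b) (X a) (X b)⁆ = 0 := by
    intro a b c h1 h2
    rw [← lie_skew, rr_ss a b c h1 h2, neg_zero]
  have ss_ss : ⁅ss u d S w (X i), ss u d S w (X j)⁆ = 0 := by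
    simp [ss, sum_lie_sum, comOm i i j j hij hij hij hij]
  have h3 : ⁅rr u d S w (z i) (z j) (X i) (X j), ∑ l ∈ E, rr u d S w (z j) (z l) (X j) (X l)⁆
      + ⁅∑ l ∈ E, rr u d S w (z i) (z l) (X i) (X l), ∑ l ∈ E, rr u d S w (z j) (z l) (X j) (X l)⁆
      + ⁅∑ l ∈ E, rr u d S w (z i) (z l) (X i) (X l), rr u d S w (z j) (z i) (X j) (X i)⁆ = 0 := by
    have hd : ⁅∑ l ∈ E, rr u d S w (z i) (z l) (X i) (X l),
          ∑ l ∈ E, rr u d S w (z j) (z l) (X j) (X l)⁆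
        = ∑ l ∈ E, ⁅rr u d S w (z i) (z l) (X i) (X l), rr u d S w (z j) (z l) (X j) (X l)⁆ := by
      rw [sum_lie]
      refine Finset.sum_congr rfl fun l hl => ?_
      rw [lie_sum]
      refine Finset.sum_eq_single_of_mem l hl fun m hm hml => ?_
      exact rr_rr _ _ _ _ hij (m1 m hm).1.symm (m1 l hl).2 hml.symm
    rw [hd, lie_sum, sum_lie, ← Finset.sum_add_distrib, ← Finset.sum_add_distrib]
    refine Finset.sum_eq_zero fun l hl => ?_
    obtain ⟨a, b⟩ := m1 l hl
    exact hC.cybe w0 wadd (hzz _ _ hij) (hzz _ _ a.symm) (hzz _ _ b.symm) (hX i) (hX j) (hX l)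
      (h _ _ hij) (h _ _ a.symm) (h _ _ b.symm)
  have h2 := hC.two w0 wadd w1 (hz i) (hz j) (hzz _ _ hij) (hX i) (hX j) (h _ _ hij)
  have h4 : ⁅∑ l ∈ E, rr u d S w (z i) (z l) (X i) (X l), (z j)⁻¹ • ss u d S w (X j)⁆ = 0 := by
    rw [sum_lie]
    refine Finset.sum_eq_zero fun l hl => ?_
    rw [lie_smul, rr_ss _ _ _ hij (m1 l hl).2, smul_zero]
  have h5 : ⁅(z i)⁻¹ • ss u d S w (X i), ∑ l ∈ E, rr u d S w (z j) (z l) (X j) (X l)⁆ = 0 := by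
    rw [lie_sum]
    refine Finset.sum_eq_zero fun l hl => ?_
    rw [smul_lie, ss_rr _ _ _ hji (m1 l hl).1, smul_zero]
  have h6 : ⁅(z i)⁻¹ • ss u d S w (X i), (z j)⁻¹ • ss u d S w (X j)⁆ = 0 := by
    rw [smul_lie, lie_smul, ss_ss, smul_zero, smul_zero]
  simp only [add_lie, lie_add, h4, h5, h6]
  have h7 := congrArg₂ (· + ·) h3 h2
  simp only [add_zero] at h7 ⊢
  rw [← h7]
  abel

/-- The embedding of the Lie algebra in a site. -/
noncomputable def site (f : UniversalEnvelopingAlgebra ℂ g →ₐ[ℂ] A) : g →ₗ[ℂ] A where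
  toFun x := f (UniversalEnvelopingAlgebra.ι ℂ x)
  map_add' x y := by
    have e : UniversalEnvelopingAlgebra.ι ℂ (x + y)
        = UniversalEnvelopingAlgebra.ι ℂ x + UniversalEnvelopingAlgebra.ι ℂ y :=
      LinearMap.map_add (@LieHom.toLinearMap ℂ g (UniversalEnvelopingAlgebra ℂ g) _ _ _
        LieRing.ofAssociativeRing LieAlgebra.ofAssociativeAlgebra (UniversalEnvelopingAlgebra.ι ℂ)) x y
    rw [e, map_add]
  map_smul' c x := by
    have e : UniversalEnvelopingAlgebra.ι ℂ (c • x) = c • UniversalEnvelopingAlgebra.ι ℂ x :=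
      LinearMap.map_smul (@LieHom.toLinearMap ℂ g (UniversalEnvelopingAlgebra ℂ g) _ _ _
        LieRing.ofAssociativeRing LieAlgebra.ofAssociativeAlgebra (UniversalEnvelopingAlgebra.ι ℂ)) c x
    rw [e, map_smul, RingHom.id_apply]

theorem site_isL (f : UniversalEnvelopingAlgebra ℂ g →ₐ[ℂ] A) : IsL (site f) := by
  intro x y
  have e : UniversalEnvelopingAlgebra.ι ℂ ⁅x, y⁆
      = UniversalEnvelopingAlgebra.ι ℂ x * UniversalEnvelopingAlgebra.ι ℂ y
        - UniversalEnvelopingAlgebra.ι ℂ y * UniversalEnvelopingAlgebra.ι ℂ x :=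
    @LieHom.map_lie ℂ g (UniversalEnvelopingAlgebra ℂ g) _ _ _
        LieRing.ofAssociativeRing LieAlgebra.ofAssociativeAlgebra (UniversalEnvelopingAlgebra.ι ℂ) x y
  change _ = f (UniversalEnvelopingAlgebra.ι ℂ ⁅x, y⁆)
  rw [e, map_sub, map_mul, map_mul, Ring.lie_def]
  rfl

end

end CycGaudin

/-- the quadratic cyclotomic Gaudin Hamiltonians pairwise
commute: ℋ_i ℋ_j = ℋ_j ℋ_i. -/
theorem stmt_17
    {g : Type*} [LieRing g] [LieAlgebra ℂ g] [FiniteDimensional ℂ g]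
    {A : Type*} [Ring A] [Algebra ℂ A]
    {κ : Type*} [Fintype κ] [DecidableEq κ]
    (B : g →ₗ[ℂ] g →ₗ[ℂ] ℂ)
    (hBsymm : ∀ x y : g, B x y = B y x)
    (hBinv : ∀ x y z : g, B ⁅x, y⁆ z = B x ⁅y, z⁆)
    (hBnd : ∀ x : g, (∀ y : g, B x y = 0) → x = 0)
    (Iup Idown : κ → g)
    (hdual : ∀ a b : κ, B (Iup a) (Idown b) = if a = b then 1 else 0)
    (hcomplete : ∀ x : g, ∑ a : κ, B x (Idown a) • Iup a = x)
    (T : ℕ) (hT : 1 ≤ T) (ω : ℂ) (hω : IsPrimitiveRoot ω T)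
    (σ : Module.End ℂ g)
    (hσLie : ∀ x y : g, σ ⁅x, y⁆ = ⁅σ x, σ y⁆)
    (hσT : σ ^ T = 1)
    (hσB : ∀ x y : g, B (σ x) (σ y) = B x y)
    (N : ℕ) (hN : 1 ≤ N)
    (z : Fin N → ℂ) (hz0 : ∀ i, z i ≠ 0)
    (hzdisj : ∀ i j : Fin N, i ≠ j → ∀ k < T, z i ≠ ω ^ k * z j)
    (ι : Fin N → (UniversalEnvelopingAlgebra ℂ g →ₐ[ℂ] A))
    (hcomm : ∀ i j : Fin N, i ≠ j →
      ∀ u v : UniversalEnvelopingAlgebra ℂ g, ι i u * ι j v = ι j v * ι i u)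
    (i j : Fin N) :
    cycGaudinHam Iup Idown σ T ω z ι i * cycGaudinHam Iup Idown σ T ω z ι j
      = cycGaudinHam Iup Idown σ T ω z ι j *
          cycGaudinHam Iup Idown σ T ω z ι i := by
  classical
  have : NeZero T := ⟨by omega⟩
  have hω1 : ω ^ T = 1 := hω.pow_eq_one
  have hω0 : ω ≠ 0 := hω.ne_zero (by omega)
  set S : ZMod T → g →ₗ[ℂ] g := fun k => σ ^ k.val with hS
  set w : ZMod T → ℂ := fun k => ω ^ k.val with hw
  have w0 : w 0 = 1 := by simp [hw]
  have wadd : ∀ k m, w (k + m) = w k * w m := by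
    intro k m
    simp only [hw, ← pow_add, ZMod.val_add]
    exact (pow_eq_pow_mod _ hω1).symm
  have w1 : ∀ k, k ≠ 0 → w k ≠ 1 := by
    intro k hk
    exact hω.pow_ne_one_of_pos_of_lt (by simpa using hk) (ZMod.val_lt k)
  have S_add : ∀ k m x, S (k + m) x = S k (S m x) := by
    intro k m x
    have : S (k + m) = S k * S m := by
      simp only [hS, ← pow_add, ZMod.val_add]
      exact (pow_eq_pow_mod _ hσT).symm
    rw [this]; rfl
  have S_zero : ∀ x, S 0 x = x := by intro x; simp [hS]
  have pLie : ∀ (n : ℕ) (x y : g), (σ ^ n) ⁅x, y⁆ = ⁅(σ ^ n) x, (σ ^ n) y⁆ := by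
    intro n
    induction n with
    | zero => intro x y; simp
    | succ n ih => intro x y; simp [pow_succ, hσLie, ih]
  have pB : ∀ (n : ℕ) (x y : g), B ((σ ^ n) x) ((σ ^ n) y) = B x y := by
    intro n
    induction n with
    | zero => intro x y; simp
    | succ n ih => intro x y; simp [pow_succ, hσB, ih]
  have hC : CycGaudin.Cas A Iup Idown S :=
    { symm := CycGaudin.symm_sum B hBsymm Iup Idown hcomplete
      inv := by
        intro F y
        rw [CycGaudin.adj_sum B hBsymm hBnd Iup Idown hcomplete (fun x => ⁅y, x⁆)
          (fun x => -⁅y, x⁆) ?_ F]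
        · rw [← Finset.sum_neg_distrib]
          exact Finset.sum_congr rfl fun a _ => map_neg _ _
        · intro a b
          rw [← lie_skew, map_neg, LinearMap.neg_apply, hBinv, map_neg]
      sig := by
        intro F k
        refine CycGaudin.adj_sum B hBsymm hBnd Iup Idown hcomplete _ _ ?_ F
        intro x y
        have := pB k.val x (S (-k) y)
        rw [← this]
        change _ = B (S k x) (S k (S (-k) y))
        rw [← S_add, add_neg_cancel, S_zero]
      S_add := S_add
      S_zero := S_zero
      S_lie := fun k => pLie k.val }
  set X : Fin N → g →ₗ[ℂ] A := fun i => CycGaudin.site (ι i) with hXd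
  have hX : ∀ i, CycGaudin.IsL (X i) := fun i => CycGaudin.site_isL (ι i)
  have hXX : ∀ i j, i ≠ j → CycGaudin.Com (X i) (X j) := by
    intro i j hij x y
    rw [Ring.lie_def, sub_eq_zero]
    exact hcomm i j hij _ _
  have sumZ : ∀ f : ℕ → A, ∑ k ∈ Finset.range T, f k = ∑ k : ZMod T, f k.val := by
    intro f
    symm
    refine Finset.sum_bij (fun k _ => k.val) ?_ ?_ ?_ ?_
    · intro k _; exact Finset.mem_range.2 (ZMod.val_lt k)
    · intro a _ b _ hab; exact ZMod.val_injective T hab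
    · intro b hb
      exact ⟨(b : ZMod T), Finset.mem_univ _, ZMod.val_cast_of_lt (Finset.mem_range.1 hb)⟩
    · intro _ _; rfl
  have wneg : ∀ k : ZMod T, ω ^ (-(k.val : ℤ)) = w (-k) := by
    intro k
    have hp : w k * w (-k) = 1 := by rw [← wadd, add_neg_cancel, w0]
    rw [zpow_neg, zpow_natCast]
    exact inv_eq_of_mul_eq_one_right hp
  have hH : ∀ i, cycGaudinHam Iup Idown σ T ω z ι i =
      (∑ l ∈ Finset.univ.erase i, CycGaudin.rr Iup Idown S w (z i) (z l) (X i) (X l))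
        + (z i)⁻¹ • CycGaudin.ss Iup Idown S w (X i) := by
    intro i
    unfold cycGaudinHam
    congr 1
    · rw [Finset.sum_comm]
      refine Finset.sum_congr rfl fun l _ => ?_
      rw [sumZ, CycGaudin.rr]
      refine Finset.sum_congr rfl fun k _ => ?_
      rw [wneg, CycGaudin.Om, Finset.smul_sum]
      rfl
    · have : ∀ f : ℕ → A, f 0 = 0 → ∑ k ∈ Finset.Ico 1 T, f k = ∑ k ∈ Finset.range T, f k := by
        intro f hf
        rw [Finset.range_eq_Ico, Finset.sum_eq_sum_Ico_succ_bot (a := 0) (by omega), hf, zero_add]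
      rw [this _ (by simp), sumZ, CycGaudin.ss, Finset.smul_sum]
      refine Finset.sum_congr rfl fun k _ => ?_
      rw [CycGaudin.Om, Finset.smul_sum, Finset.smul_sum]
      refine Finset.sum_congr rfl fun a _ => ?_
      rw [smul_smul, mul_inv, mul_comm, map_mul]
      rfl
  rw [hH, hH, ← sub_eq_zero, ← Ring.lie_def]
  refine hC.main w0 wadd w1 hz0 ?_ hX hXX i j
  intro i j hij k
  exact sub_ne_zero.2 (hzdisj i j hij k.val (ZMod.val_lt k))
end

section
/- Each quadratic cyclotomic Gaudin Hamiltonian commutes with the diagonal action of the σ-invariant subalgebra: for every x ∈ 𝔤 with σ(x) = x and every i ∈ {1, …, N}, one has ℋ_i · (Σ_{j=1}^{N} ι_j(x)) = (Σ_{j=1}^{N} ι_j(x)) · ℋ_i in U(𝔤)^{⊗N}. -/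
open scoped BigOperators

section UEA

attribute [local instance] LieRing.ofAssociativeRing

/-- The bracket relation in the enveloping algebra. -/
theorem uea_lie {g : Type*} [LieRing g] [LieAlgebra ℂ g] (x y : g) :
    UniversalEnvelopingAlgebra.ι ℂ ⁅x, y⁆
      = UniversalEnvelopingAlgebra.ι ℂ x * UniversalEnvelopingAlgebra.ι ℂ y
        - UniversalEnvelopingAlgebra.ι ℂ y * UniversalEnvelopingAlgebra.ι ℂ x := by
  rw [LieHom.map_lie, LieRing.of_associative_ring_bracket]

/-- The canonical map to the enveloping algebra, as a linear map. -/
noncomputable def ueaLin (g : Type*) [LieRing g] [LieAlgebra ℂ g] :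
    g →ₗ[ℂ] UniversalEnvelopingAlgebra ℂ g :=
  (UniversalEnvelopingAlgebra.ι (L := g) ℂ).toLinearMap

end UEA

/-- Invariance of the Casimir tensor, evaluated through a bilinear map. -/
theorem casimir_bilin_inv
    {g : Type*} [LieRing g] [LieAlgebra ℂ g]
    {A : Type*} [Ring A] [Algebra ℂ A]
    {κ : Type*} [Fintype κ] [DecidableEq κ]
    (B : g →ₗ[ℂ] g →ₗ[ℂ] ℂ)
    (hBsymm : ∀ x y : g, B x y = B y x)
    (hBinv : ∀ x y z : g, B ⁅x, y⁆ z = B x ⁅y, z⁆)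
    (hBnd : ∀ x : g, (∀ y : g, B x y = 0) → x = 0)
    (Iup Idown : κ → g)
    (hdual : ∀ a b : κ, B (Iup a) (Idown b) = if a = b then 1 else 0)
    (hcomplete : ∀ x : g, ∑ a : κ, B x (Idown a) • Iup a = x)
    (F : g →ₗ[ℂ] g →ₗ[ℂ] A) (x : g) :
    ∑ a : κ, (F ⁅x, Iup a⁆ (Idown a) + F (Iup a) ⁅x, Idown a⁆) = 0 := by
  have hdown : ∀ y : g, ∑ b : κ, B (Iup b) y • Idown b = y := by
    intro y
    rw [← sub_eq_zero]
    apply hBnd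
    intro w
    rw [hBsymm, ← hcomplete w]
    simp only [map_sum, map_smul, LinearMap.sum_apply, LinearMap.smul_apply, map_sub, hdual]
    simp [mul_comm]
  have h1 : ∀ a, F ⁅x, Iup a⁆ (Idown a)
      = ∑ b : κ, -(B (Iup a) ⁅x, Idown b⁆ • F (Iup b) (Idown a)) := by
    intro a
    conv_lhs => rw [← hcomplete ⁅x, Iup a⁆]
    simp only [map_sum, map_smul, LinearMap.sum_apply, LinearMap.smul_apply]
    refine Finset.sum_congr rfl fun b _ => ?_
    rw [← lie_skew x (Iup a), map_neg, LinearMap.neg_apply, hBinv, neg_smul]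
  have h2 : ∀ a, F (Iup a) ⁅x, Idown a⁆
      = ∑ b : κ, B (Iup b) ⁅x, Idown a⁆ • F (Iup a) (Idown b) := by
    intro a
    conv_lhs => rw [← hdown ⁅x, Idown a⁆]
    simp only [map_sum, map_smul]
  rw [Finset.sum_add_distrib]
  simp only [h1, h2]
  rw [Finset.sum_comm, ← Finset.sum_add_distrib]
  apply Finset.sum_eq_zero
  intro a _
  rw [← Finset.sum_add_distrib]
  apply Finset.sum_eq_zero
  intro b _
  simp

/-- each quadratic cyclotomic Gaudin Hamiltonian commutes with
the diagonal action of the σ-invariant subalgebra 𝔤^σ. -/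
theorem stmt_18
    {g : Type*} [LieRing g] [LieAlgebra ℂ g] [FiniteDimensional ℂ g]
    {A : Type*} [Ring A] [Algebra ℂ A]
    {κ : Type*} [Fintype κ] [DecidableEq κ]
    (B : g →ₗ[ℂ] g →ₗ[ℂ] ℂ)
    (hBsymm : ∀ x y : g, B x y = B y x)
    (hBinv : ∀ x y z : g, B ⁅x, y⁆ z = B x ⁅y, z⁆)
    (hBnd : ∀ x : g, (∀ y : g, B x y = 0) → x = 0)
    (Iup Idown : κ → g)
    (hdual : ∀ a b : κ, B (Iup a) (Idown b) = if a = b then 1 else 0)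
    (hcomplete : ∀ x : g, ∑ a : κ, B x (Idown a) • Iup a = x)
    (T : ℕ) (hT : 1 ≤ T) (ω : ℂ) (hω : IsPrimitiveRoot ω T)
    (σ : Module.End ℂ g)
    (hσLie : ∀ x y : g, σ ⁅x, y⁆ = ⁅σ x, σ y⁆)
    (hσT : σ ^ T = 1)
    (hσB : ∀ x y : g, B (σ x) (σ y) = B x y)
    (N : ℕ) (hN : 1 ≤ N)
    (z : Fin N → ℂ) (hz0 : ∀ i, z i ≠ 0)
    (hzdisj : ∀ i j : Fin N, i ≠ j → ∀ k < T, z i ≠ ω ^ k * z j)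
    (ι : Fin N → (UniversalEnvelopingAlgebra ℂ g →ₐ[ℂ] A))
    (hcomm : ∀ i j : Fin N, i ≠ j →
      ∀ u v : UniversalEnvelopingAlgebra ℂ g, ι i u * ι j v = ι j v * ι i u)
    (x : g) (hx : σ x = x) (i : Fin N) :
    cycGaudinHam Iup Idown σ T ω z ι i *
        (∑ j : Fin N, ι j (UniversalEnvelopingAlgebra.ι ℂ x))
      = (∑ j : Fin N, ι j (UniversalEnvelopingAlgebra.ι ℂ x)) *
          cycGaudinHam Iup Idown σ T ω z ι i := by
  set X : A := ∑ j : Fin N, ι j (UniversalEnvelopingAlgebra.ι ℂ x) with hX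
  have hbr : ∀ (j : Fin N) (y : g),
      X * ι j (UniversalEnvelopingAlgebra.ι ℂ y)
        = ι j (UniversalEnvelopingAlgebra.ι ℂ y) * X
          + ι j (UniversalEnvelopingAlgebra.ι ℂ ⁅x, y⁆) := by
    intro j y
    rw [hX, Finset.sum_mul, Finset.mul_sum, ← sub_eq_iff_eq_add', ← Finset.sum_sub_distrib,
      Finset.sum_eq_single j]
    · rw [uea_lie, map_sub, map_mul, map_mul]
    · intro l _ hl
      rw [hcomm l j hl, sub_self]
    · intro h
      exact absurd (Finset.mem_univ j) h
  have hpow : ∀ (k : ℕ) (y : g), (σ ^ k) ⁅x, y⁆ = ⁅x, (σ ^ k) y⁆ := by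
    intro k
    induction k with
    | zero => intro y; simp
    | succ k ih =>
      intro y
      rw [pow_succ, Module.End.mul_apply, hσLie, hx, ih, Module.End.mul_apply]
  let L : Fin N → g →ₗ[ℂ] A := fun j =>
    (ι j).toLinearMap ∘ₗ ueaLin g
  have key : ∀ (k : ℕ) (j : Fin N), Commute
      (∑ a : κ, ι i (UniversalEnvelopingAlgebra.ι ℂ (Iup a)) *
        ι j (UniversalEnvelopingAlgebra.ι ℂ ((σ ^ k) (Idown a)))) X := by
    intro k j
    have h := casimir_bilin_inv B hBsymm hBinv hBnd Iup Idown hdual hcomplete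
      ((LinearMap.mul ℂ A).compl₁₂ (L i) (L j ∘ₗ (σ ^ k))) x
    have h' : ∑ a : κ, (ι i (UniversalEnvelopingAlgebra.ι ℂ ⁅x, Iup a⁆) *
          ι j (UniversalEnvelopingAlgebra.ι ℂ ((σ ^ k) (Idown a)))
        + ι i (UniversalEnvelopingAlgebra.ι ℂ (Iup a)) *
          ι j (UniversalEnvelopingAlgebra.ι ℂ ((σ ^ k) ⁅x, Idown a⁆))) = 0 := h
    symm
    change _ * _ = _ * _
    rw [← sub_eq_zero, Finset.mul_sum, Finset.sum_mul, ← Finset.sum_sub_distrib, ← h']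
    refine Finset.sum_congr rfl fun a _ => ?_
    rw [← mul_assoc, hbr, add_mul, mul_assoc, hbr, hpow, mul_add, mul_assoc]
    abel
  change Commute _ X
  unfold cycGaudinHam
  refine Commute.add_left ?_ ?_
  · refine Commute.sum_left _ _ _ fun k _ => Commute.sum_left _ _ _ fun j _ => ?_
    rw [← Finset.smul_sum]
    exact (key k j).smul_left _
  · refine Commute.sum_left _ _ _ fun k _ => ?_
    rw [← Finset.smul_sum]
    simp only [map_mul]
    exact (key k i).smul_left _
end
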